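/- arXiv:2211.02991 — 3 statements merged into one kernel-verified Lean document; each statement's English description precedes it below -/
import Mathlib

section
/- Let (M,d,μ) be a metric measure space in which every ball has finite measure and r ↦ V_x(r)=μ(B(x,r)) is continuous for every x, let β>1, and let k : M×M → ℝ be measurable and satisfy (K3): |k(x,y)| ≤ B·V_x(d(x,y))^{−1/β} and |k(x,y)| ≤ B·V_y(d(x,y))^{−1/β} for all x,y, for some B ≥ 0. Then there exists a constant C such that for all x ∈ M and all radii r_1<r_2 with 0<V_x(r_1)<V_x(r_2): | ∫_{r_1 ≤ d(x,y) ≤ r_2} |k(x,y)|^{β} dμ(y) − ∫_{V_x(r_1)}^{V_x(r_2)} (k^*(x,t))^{β} dt | ≤ C, where k^*(x,·) is the decreasing rearrangement of k(x,·). -/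
/-!
Write `m(s) = μ(A ∩ {|g| > s})` and `e(s) = μ{|g| > s}`. By the layer-cake formula
`∫_A |g| = ∫₀^∞ m(s) ds`, while `s < g^*(t) ↔ t < e(s)` gives
`∫_{v₁}^{v₂} g^*(t) dt = ∫₀^∞ n(s) ds` with `n(s) = (min(e(s), v₂) - v₁)₊`.

Let `S` and `S ∪ A` have measures `v₁` and `v₂`. Always `m ≤ n + v₁` and `n ≤ m + v₂`. If
`|g| ≤ D / v₁` on `A`, then `m` vanishes beyond the level `D / v₁`; if `|g| ≤ D / v₂` off `S ∪ A`,
then `{|g| > s} ⊆ S ∪ A`, hence `n ≤ m`, beyond the level `D / v₂`. Either error term is thus a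
constant `vᵢ` on an interval of length `D / vᵢ`, and the two integrals differ by at most `D`. For
balls `S = B(x,r₁)` and `S ∪ A = B(x,r₂)` and the function `|k(x,·)|^β`, condition (K3) gives both
bounds with `D = B^β`.
-/

open MeasureTheory Metric Set
open scoped ENNReal

noncomputable section

/-- `V_x(r) = μ(B(x,r))`, as a real number. -/
def ballVol {M : Type*} [MetricSpace M] [MeasurableSpace M] (μ : Measure M) (x : M) (r : ℝ) : ℝ :=
  (μ (closedBall x r)).toReal

/-- The decreasing rearrangement `g^*(t) = inf{s ≥ 0 : μ{|g| > s} ≤ t}`. -/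
def decRearr {M : Type*} [MeasurableSpace M] (μ : Measure M) (g : M → ℝ) (t : ℝ) : ℝ :=
  sInf {s : ℝ | 0 ≤ s ∧ μ {x | s < |g x|} ≤ ENNReal.ofReal t}

section Rearrangement

variable {α : Type*} [MeasurableSpace α]

/-- The distribution function `s ↦ μ{|g| > s}` of `g`, whose generalized inverse is the decreasing
rearrangement of `g`. -/
def distFun (μ : Measure α) (g : α → ℝ) (s : ℝ) : ℝ≥0∞ :=
  μ {y | s < |g y|}

variable {μ : Measure α} {g : α → ℝ} {s t v₁ v₂ : ℝ}

lemma distFun_antitone : Antitone (distFun μ g) := fun _ _ h =>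
  measure_mono fun _ hy => h.trans_lt hy

lemma distFun_le_of_forall_gt {c : ℝ≥0∞} (h : ∀ u, s < u → distFun μ g u ≤ c) :
    distFun μ g s ≤ c := by
  obtain ⟨u, hu_anti, hu_gt, hu_tendsto⟩ := exists_seq_strictAnti_tendsto s
  have hunion : {y | s < |g y|} = ⋃ n, {y | u n < |g y|} := by
    have hglb : IsGLB (range u) s := isGLB_of_tendsto_atTop hu_anti.antitone hu_tendsto
    exact (congrArg (preimage fun y => |g y|) hglb.iUnion_Ioi_eq.symm).trans preimage_iUnion
  have hmono : Monotone fun n => {y | u n < |g y|} := fun _ _ hmn _ hy =>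
    (hu_anti.antitone hmn).trans_lt hy
  rw [distFun, hunion, hmono.measure_iUnion]
  exact iSup_le fun n => h (u n) (hu_gt n)

lemma distFun_abs_rpow {β : ℝ} (hβ : 0 < β) (hs : 0 ≤ s) :
    distFun μ (fun y => |g y| ^ β) (s ^ β) = distFun μ g s := by
  simp only [distFun, abs_of_nonneg (Real.rpow_nonneg (abs_nonneg _) β),
    Real.rpow_lt_rpow_iff hs (abs_nonneg _) hβ]

lemma decRearr_nonneg : 0 ≤ decRearr μ g t :=
  Real.sInf_nonneg fun _ hu => hu.1

lemma bddBelow_decRearr_levels :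
    BddBelow {s : ℝ | 0 ≤ s ∧ distFun μ g s ≤ ENNReal.ofReal t} :=
  ⟨0, fun _ hu => hu.1⟩

lemma decRearr_antitoneOn (hne : ∃ u, 0 ≤ u ∧ distFun μ g u ≤ ENNReal.ofReal t) :
    AntitoneOn (decRearr μ g) (Ici t) := fun _ ha _ _ hab =>
  csInf_le_csInf bddBelow_decRearr_levels
    (hne.imp fun _ hu => ⟨hu.1, hu.2.trans (ENNReal.ofReal_le_ofReal ha)⟩)
    fun _ hu => ⟨hu.1, hu.2.trans (ENNReal.ofReal_le_ofReal hab)⟩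

lemma lt_decRearr_iff (hs : 0 ≤ s) (hne : ∃ u, 0 ≤ u ∧ distFun μ g u ≤ ENNReal.ofReal t) :
    s < decRearr μ g t ↔ ENNReal.ofReal t < distFun μ g s := by
  contrapose!
  refine ⟨fun h => distFun_le_of_forall_gt fun u hu => ?_,
    fun h => csInf_le bddBelow_decRearr_levels ⟨hs, h⟩⟩
  obtain ⟨w, hw, hwu⟩ := exists_lt_of_csInf_lt hne (h.trans_lt hu)
  exact (distFun_antitone hwu.le).trans hw.2

lemma decRearr_abs_rpow {β : ℝ} (hβ : 0 < β) :
    decRearr μ (fun y => |g y| ^ β) t = decRearr μ g t ^ β := by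
  have himage : {s : ℝ | 0 ≤ s ∧ distFun μ (fun y => |g y| ^ β) s ≤ ENNReal.ofReal t} =
      (· ^ β) '' {s : ℝ | 0 ≤ s ∧ distFun μ g s ≤ ENNReal.ofReal t} := by
    ext s
    constructor
    · rintro ⟨hs, hle⟩
      have hroot : (s ^ β⁻¹) ^ β = s := Real.rpow_inv_rpow hs hβ.ne'
      refine ⟨s ^ β⁻¹, ⟨Real.rpow_nonneg hs _, ?_⟩, hroot⟩
      rwa [← distFun_abs_rpow hβ (Real.rpow_nonneg hs _), hroot]
    · rintro ⟨u, ⟨hu, hle⟩, rfl⟩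
      exact ⟨Real.rpow_nonneg hu β, (distFun_abs_rpow hβ hu).trans_le hle⟩
  refine (congrArg sInf himage).trans ?_
  rcases {s : ℝ | 0 ≤ s ∧ distFun μ g s ≤ ENNReal.ofReal t}.eq_empty_or_nonempty with hempty | hne
  · have hzero : decRearr μ g t = 0 := (congrArg sInf hempty).trans Real.sInf_empty
    rw [hempty, image_empty, Real.sInf_empty, hzero, Real.zero_rpow hβ.ne']
  · refine (MonotoneOn.map_csInf_of_continuousWithinAt
      (Real.continuous_rpow_const hβ.le).continuousWithinAt ?_ hne bddBelow_decRearr_levels).symm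
    exact fun a ha b _ hab => Real.rpow_le_rpow ha.1 hab hβ.le

lemma volume_ofReal_lt_inter_Ioc (hv₁ : 0 ≤ v₁) (e : ℝ≥0∞) :
    volume ({t : ℝ | ENNReal.ofReal t < e} ∩ Ioc v₁ v₂) =
      min e (ENNReal.ofReal v₂) - ENNReal.ofReal v₁ := by
  rcases lt_or_ge (ENNReal.ofReal v₂) e with he | he
  · have hset : {t : ℝ | ENNReal.ofReal t < e} ∩ Ioc v₁ v₂ = Ioc v₁ v₂ :=
      inter_eq_right.2 fun t ht => (ENNReal.ofReal_le_ofReal ht.2).trans_lt he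
    rw [hset, Real.volume_Ioc, min_eq_right he.le, ENNReal.ofReal_sub _ hv₁]
  · have he_top : e ≠ ∞ := ne_top_of_le_ne_top ENNReal.ofReal_ne_top he
    have hset : {t : ℝ | ENNReal.ofReal t < e} ∩ Ioc v₁ v₂ = Ioo v₁ e.toReal := by
      ext t
      refine ⟨fun ⟨hte, ht⟩ => ⟨ht.1, ?_⟩, fun ht => ?_⟩
      · exact (ENNReal.ofReal_lt_iff_lt_toReal (hv₁.trans ht.1.le) he_top).1 hte
      · have hte : ENNReal.ofReal t < e :=
          (ENNReal.ofReal_lt_iff_lt_toReal (hv₁.trans ht.1.le) he_top).2 ht.2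
        exact ⟨hte, ht.1, ((ENNReal.ofReal_lt_ofReal_iff_of_nonneg (hv₁.trans ht.1.le)).1
          (hte.trans_le he)).le⟩
    rw [hset, Real.volume_Ioo, min_eq_left he, ENNReal.ofReal_sub _ hv₁,
      ENNReal.ofReal_toReal he_top]

lemma aemeasurable_decRearr (hne : ∃ u, 0 ≤ u ∧ distFun μ g u ≤ ENNReal.ofReal v₁) :
    AEMeasurable (decRearr μ g) (volume.restrict (Ioc v₁ v₂)) :=
  aemeasurable_restrict_of_antitoneOn measurableSet_Ioc
    ((decRearr_antitoneOn hne).mono fun _ ht => ht.1.le)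

lemma setLIntegral_abs_eq_lintegral_distFun {A : Set α} (hg : AEMeasurable g (μ.restrict A)) :
    ∫⁻ y in A, ENNReal.ofReal |g y| ∂μ = ∫⁻ s in Ioi 0, distFun (μ.restrict A) g s :=
  lintegral_eq_lintegral_meas_lt _ (.of_forall fun _ => abs_nonneg _) hg.abs

lemma setLIntegral_decRearr (hv₁ : 0 ≤ v₁)
    (hne : ∃ u, 0 ≤ u ∧ distFun μ g u ≤ ENNReal.ofReal v₁) :
    ∫⁻ t in Ioc v₁ v₂, ENNReal.ofReal (decRearr μ g t) =
      ∫⁻ s in Ioi 0, (min (distFun μ g s) (ENNReal.ofReal v₂) - ENNReal.ofReal v₁) := by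
  rw [lintegral_eq_lintegral_meas_lt _ (.of_forall fun _ => decRearr_nonneg)
    (aemeasurable_decRearr hne)]
  refine setLIntegral_congr_fun measurableSet_Ioi fun s hs => ?_
  rw [← volume_ofReal_lt_inter_Ioc hv₁, Measure.restrict_apply' measurableSet_Ioc]
  congr 1
  ext t
  refine and_congr_left fun ht => lt_decRearr_iff (le_of_lt hs) (hne.imp fun u hu => ?_)
  exact ⟨hu.1, hu.2.trans (ENNReal.ofReal_le_ofReal ht.1.le)⟩

end Rearrangement

lemma lintegral_Ioi_le_add {f h : ℝ → ℝ≥0∞} {D v : ℝ} (hv : 0 < v)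
    (hle_add : ∀ s, 0 < s → f s ≤ h s + ENNReal.ofReal v)
    (hle : ∀ s, 0 < s → D ≤ s * v → f s ≤ h s) :
    ∫⁻ s in Ioi 0, f s ≤ (∫⁻ s in Ioi 0, h s) + ENNReal.ofReal D := by
  let err : ℝ → ℝ≥0∞ := (Iio (D / v)).indicator fun _ => ENNReal.ofReal v
  have herr : ∫⁻ s in Ioi 0, err s = ENNReal.ofReal D := by
    rw [lintegral_indicator_const measurableSet_Iio, Measure.restrict_apply measurableSet_Iio,
      Iio_inter_Ioi, Real.volume_Ioo, sub_zero, ← ENNReal.ofReal_mul hv.le,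
      mul_div_cancel₀ D hv.ne']
  rw [← herr, ← lintegral_add_right _ (measurable_const.indicator measurableSet_Iio)]
  refine setLIntegral_mono' measurableSet_Ioi fun s hs => ?_
  by_cases hsD : s < D / v
  · simpa only [err, indicator_of_mem (mem_Iio.2 hsD)] using hle_add s hs
  · exact (hle s hs ((div_le_iff₀ hv).1 (not_lt.1 hsD))).trans le_self_add

lemma abs_toReal_sub_toReal_le {a b : ℝ≥0∞} {c : ℝ} (hc : 0 ≤ c)
    (hab : a ≤ b + ENNReal.ofReal c) (hba : b ≤ a + ENNReal.ofReal c) :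
    |a.toReal - b.toReal| ≤ c := by
  by_cases ha : a = ∞
  · have hb : b = ∞ := by simpa [ha] using hab
    simpa [ha, hb] using hc
  · have hb : b ≠ ∞ := ne_top_of_le_ne_top (by simp [ha]) hba
    have hab_real := ENNReal.toReal_le_add hab hb ENNReal.ofReal_ne_top
    have hba_real := ENNReal.toReal_le_add hba ha ENNReal.ofReal_ne_top
    rw [ENNReal.toReal_ofReal hc] at hab_real hba_real
    exact abs_sub_le_iff.2 ⟨sub_le_iff_le_add'.2 hab_real, sub_le_iff_le_add'.2 hba_real⟩

section Comparison

variable {α : Type*} [MeasurableSpace α] {μ : Measure α} {g : α → ℝ} {S A : Set α} {D s : ℝ}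

lemma distFun_restrict_le_min :
    distFun (μ.restrict A) g s ≤ min (distFun μ g s) (μ (S ∪ A)) :=
  le_min (Measure.restrict_le_self _) <|
    calc distFun (μ.restrict A) g s ≤ μ.restrict A univ := measure_mono (subset_univ _)
      _ = μ A := Measure.restrict_apply_univ A
      _ ≤ μ (S ∪ A) := measure_mono subset_union_right

lemma distFun_restrict_eq_zero (hA : MeasurableSet A) (h : ∀ y ∈ A, |g y| ≤ s) :
    distFun (μ.restrict A) g s = 0 := by
  rw [distFun, Measure.restrict_apply' hA, ← nonpos_iff_eq_zero, ← measure_empty (μ := μ)]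
  exact measure_mono fun y hy => (h y hy.2).not_gt hy.1

lemma distFun_le_add_distFun_restrict (h : ∀ y ∉ S ∪ A, |g y| ≤ s) :
    distFun μ g s ≤ μ S + distFun (μ.restrict A) g s := by
  have hsub : {y | s < |g y|} ⊆ S ∪ ({y | s < |g y|} ∩ A) := fun y hy =>
    (not_imp_comm.1 (h y) (not_le.2 hy)).imp id fun hyA => ⟨hy, hyA⟩
  calc distFun μ g s ≤ μ S + μ ({y | s < |g y|} ∩ A) :=
        (measure_mono hsub).trans (measure_union_le _ _)
    _ ≤ μ S + distFun (μ.restrict A) g s := by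
        gcongr
        exact Measure.le_restrict_apply _ _

theorem abs_setIntegral_sub_integral_decRearr_le (hg : AEMeasurable g μ) (hA : MeasurableSet A)
    (hD : 0 ≤ D) (hS : 0 < μ.real S) (hfin : μ (S ∪ A) ≠ ∞)
    (hgA : ∀ y ∈ A, |g y| * μ.real S ≤ D)
    (hg_compl : ∀ y ∉ S ∪ A, |g y| * μ.real (S ∪ A) ≤ D) :
    |(∫ y in A, |g y| ∂μ) - ∫ t in Ioc (μ.real S) (μ.real (S ∪ A)), decRearr μ g t| ≤ D := by
  have hμS : ENNReal.ofReal (μ.real S) = μ S :=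
    ofReal_measureReal (measure_ne_top_of_subset subset_union_left hfin)
  have hμSA : ENNReal.ofReal (μ.real (S ∪ A)) = μ (S ∪ A) := ofReal_measureReal hfin
  have hS_le : μ.real S ≤ μ.real (S ∪ A) := measureReal_mono subset_union_left hfin
  have hSA : 0 < μ.real (S ∪ A) := hS.trans_le hS_le
  have hvanish : ∀ s, D ≤ s * μ.real S → distFun (μ.restrict A) g s = 0 := fun s hs =>
    distFun_restrict_eq_zero hA fun y hy => le_of_mul_le_mul_right ((hgA y hy).trans hs) hS
  have hle : ∀ s, D ≤ s * μ.real (S ∪ A) →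
      distFun μ g s ≤ μ S + distFun (μ.restrict A) g s := fun s hs =>
    distFun_le_add_distFun_restrict fun y hy =>
      le_of_mul_le_mul_right ((hg_compl y hy).trans hs) hSA
  have hne : ∃ u, 0 ≤ u ∧ distFun μ g u ≤ ENNReal.ofReal (μ.real S) := by
    have hu : 0 ≤ D / μ.real S := by positivity
    have hD_eq : D = D / μ.real S * μ.real S := (div_mul_cancel₀ D hS.ne').symm
    refine ⟨D / μ.real S, hu, ?_⟩
    simpa only [hμS, hvanish _ hD_eq.le, add_zero] using
      hle _ (hD_eq.trans_le (mul_le_mul_of_nonneg_left hS_le hu))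
  rw [integral_eq_lintegral_of_nonneg_ae (.of_forall fun _ => abs_nonneg _)
      hg.restrict.abs.aestronglyMeasurable,
    integral_eq_lintegral_of_nonneg_ae (.of_forall fun _ => decRearr_nonneg)
      (aemeasurable_decRearr hne).aestronglyMeasurable,
    setLIntegral_abs_eq_lintegral_distFun hg.restrict, setLIntegral_decRearr hS.le hne, hμS, hμSA]
  refine abs_toReal_sub_toReal_le hD (lintegral_Ioi_le_add hS (fun s _ => ?_) fun s _ hs => ?_)
    (lintegral_Ioi_le_add hSA (fun s _ => ?_) fun s _ hs => ?_)
  · exact hμS ▸ distFun_restrict_le_min.trans le_tsub_add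
  · exact (hvanish s hs).trans_le zero_le
  · exact hμSA ▸ tsub_le_self.trans ((min_le_right _ _).trans le_add_self)
  · exact tsub_le_iff_left.2 ((min_le_left _ _).trans (hle s hs))

end Comparison

lemma rpow_mul_le_of_le_mul_rpow {β B a v : ℝ} (hβ : 0 < β) (hB : 0 ≤ B) (ha : 0 ≤ a) (hv : 0 < v)
    (h : a ≤ B * v ^ (-(1 / β))) : a ^ β * v ≤ B ^ β := by
  have hpow : (v ^ (-(1 / β))) ^ β = v⁻¹ := by
    rw [← Real.rpow_mul hv.le, neg_mul, one_div_mul_cancel hβ.ne', Real.rpow_neg_one]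
  calc a ^ β * v ≤ (B * v ^ (-(1 / β))) ^ β * v := by gcongr
    _ = B ^ β := by
        rw [Real.mul_rpow hB (Real.rpow_nonneg hv.le _), hpow, inv_mul_cancel_right₀ hv.ne']

lemma closedBall_union_annulus {M : Type*} [PseudoMetricSpace M] (x : M) {r₁ r₂ : ℝ}
    (hr : r₁ ≤ r₂) :
    closedBall x r₁ ∪ {y | r₁ ≤ dist x y ∧ dist x y ≤ r₂} = closedBall x r₂ := by
  ext y
  rw [mem_union, mem_closedBall', mem_closedBall', mem_ofPred_eq]
  grind

theorem annulus_integral_eq_rearrangement_integral_general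
    {M : Type*} [MetricSpace M] [MeasurableSpace M] [OpensMeasurableSpace M] (μ : Measure M)
    (x : M) (hfin : ∀ r : ℝ, μ (closedBall x r) ≠ ∞) {β B : ℝ} (hβ : 0 < β) (hB : 0 ≤ B)
    {g : M → ℝ} (hg : AEMeasurable g μ)
    (hK3 : ∀ y, |g y| ≤ B * ballVol μ x (dist x y) ^ (-(1 / β)))
    {r₁ r₂ : ℝ} (hr : r₁ ≤ r₂) (hr₁ : 0 < ballVol μ x r₁) :
    |(∫ y in {y | r₁ ≤ dist x y ∧ dist x y ≤ r₂}, |g y| ^ β ∂μ)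
      - ∫ t in Ioc (ballVol μ x r₁) (ballVol μ x r₂), decRearr μ g t ^ β| ≤ B ^ β := by
  have hmono : Monotone (ballVol μ x) := fun _ s h =>
    ENNReal.toReal_mono (hfin s) (measure_mono (closedBall_subset_closedBall h))
  have hdecay : ∀ r y, r₁ ≤ r → r ≤ dist x y → |(|g y| ^ β)| * ballVol μ x r ≤ B ^ β := by
    intro r y hr₁r hry
    rw [abs_of_nonneg (by positivity)]
    calc |g y| ^ β * ballVol μ x r ≤ |g y| ^ β * ballVol μ x (dist x y) := by
          gcongr
          exact hmono hry
      _ ≤ B ^ β := rpow_mul_le_of_le_mul_rpow hβ hB (abs_nonneg _)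
          (hr₁.trans_le (hmono (hr₁r.trans hry))) (hK3 y)
  have hunion := closedBall_union_annulus x hr
  have hmeas : MeasurableSet {y | r₁ ≤ dist x y ∧ dist x y ≤ r₂} :=
    measurableSet_Icc.preimage (continuous_const.dist continuous_id).measurable
  have key := abs_setIntegral_sub_integral_decRearr_le (g := fun y => |g y| ^ β)
    (S := closedBall x r₁) (by fun_prop) hmeas (Real.rpow_nonneg hB β) hr₁
    (hunion ▸ hfin r₂) (fun y hy => hdecay r₁ y le_rfl hy.1) (fun y hy => ?_)
  · simpa only [hunion, decRearr_abs_rpow hβ, abs_of_nonneg (Real.rpow_nonneg (abs_nonneg _) β),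
      Measure.real, ballVol] using key
  · rw [hunion, mem_closedBall', not_le] at hy
    exact hunion.symm ▸ hdecay r₂ y hr hy.le

/-- **Appendix A, (A.1)**: under condition (K3), annulus integrals of `|k|^β` agree, up to a
bounded error, with the corresponding integrals of the decreasing rearrangement `(k^*(x,·))^β`. -/
theorem annulus_integral_eq_rearrangement_integral
    {M : Type*} [MetricSpace M] [MeasurableSpace M] [BorelSpace M] (μ : Measure M)
    (hfin : ∀ (x : M) (r : ℝ), μ (closedBall x r) ≠ ∞)
    (hcont : ∀ x : M, Continuous fun r : ℝ => ballVol μ x r)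
    (β B : ℝ) (hβ : 1 < β) (hB : 0 ≤ B)
    (k : M → M → ℝ) (hk_meas : Measurable (Function.uncurry k))
    (hK3a : ∀ x y : M, |k x y| ≤ B * ballVol μ x (dist x y) ^ (-(1 / β)))
    (hK3b : ∀ x y : M, |k x y| ≤ B * ballVol μ y (dist x y) ^ (-(1 / β))) :
    ∃ C : ℝ, 0 < C ∧ ∀ (x : M) (r₁ r₂ : ℝ), r₁ < r₂ → 0 < ballVol μ x r₁ →
      ballVol μ x r₁ < ballVol μ x r₂ →
      |(∫ y in {y | r₁ ≤ dist x y ∧ dist x y ≤ r₂}, |k x y| ^ β ∂μ)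
        - ∫ t in Set.Ioc (ballVol μ x r₁) (ballVol μ x r₂),
            (decRearr μ (fun y => k x y) t) ^ β| ≤ C :=
  ⟨B ^ β + 1, by positivity, fun x _ _ hr hr₁ _ =>
    (annulus_integral_eq_rearrangement_integral_general μ x (hfin x) (one_pos.trans hβ) hB
      (hk_meas.comp measurable_prodMk_left).aemeasurable (hK3a x) hr.le hr₁).trans (by linarith)⟩
end
end

section
/- Let (M,d,μ) be a metric measure space in which every ball has finite measure and r ↦ V_x(r)=μ(B(x,r)) is continuous for every x. Then for every x ∈ M and every t with 0 < t < μ(M), the decreasing rearrangement of the function y ↦ 1/V_x(d(x,y)) evaluated at t equals 1/t. -/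
/-!
If the distribution function `V r = μ {f ≤ r}` of a function `f` is continuous and vanishes at `-∞`,
it takes every value strictly between `0` and `μ univ`, so `V ∘ f` is uniformly distributed:
`μ {V ∘ f < u} = min u (μ univ)`. Since `s < 1 / V (f y)` means `V (f y) < 1 / s`, the condition
`μ {s < 1 / V ∘ f} ≤ t` becomes `min (1 / s) (μ univ) ≤ t`, that is, `1 / t ≤ s` when `t < μ univ`.
Ball volumes are the case `f = dist x`.
-/

open MeasureTheory Metric Set
open scoped ENNReal

noncomputable section

/-- The decreasing rearrangement of an `ℝ≥0∞`-valued function: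
`g^*(t) = inf{s : μ{g > s} ≤ t}`. -/
def decRearrE {M : Type*} [MeasurableSpace M] (μ : Measure M) (g : M → ℝ≥0∞) (t : ℝ) : ℝ≥0∞ :=
  sInf {s : ℝ≥0∞ | μ {x | s < g x} ≤ ENNReal.ofReal t}

open Filter Topology

section DistributionFunction

variable {α : Type*} [MeasurableSpace α] {μ : Measure α} {f : α → ℝ}

theorem monotone_measure_preimage_Iic : Monotone fun r => μ (f ⁻¹' Iic r) :=
  fun _ _ hrs => measure_mono (preimage_mono (monotone_Iic hrs))

theorem tendsto_measure_preimage_Iic_atTop :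
    Tendsto (fun r => μ (f ⁻¹' Iic r)) atTop (𝓝 (μ univ)) := by
  rw [← preimage_univ (f := f), ← iUnion_Iic, preimage_iUnion]
  exact tendsto_measure_iUnion_atTop (monotone_preimage.comp monotone_Iic)

theorem exists_measure_preimage_Iic_eq (hcont : Continuous fun r => μ (f ⁻¹' Iic r))
    (hbot : Tendsto (fun r => μ (f ⁻¹' Iic r)) atBot (𝓝 0)) {u : ℝ≥0∞} (hu₀ : 0 < u)
    (hu : u < μ univ) : ∃ r, μ (f ⁻¹' Iic r) = u :=
  mem_range_of_exists_le_of_exists_ge hcont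
    (hbot.eventually_le_const hu₀).exists
    (tendsto_measure_preimage_Iic_atTop.eventually_const_le hu).exists

theorem measure_measure_preimage_Iic_lt (hcont : Continuous fun r => μ (f ⁻¹' Iic r))
    (hbot : Tendsto (fun r => μ (f ⁻¹' Iic r)) atBot (𝓝 0)) (u : ℝ≥0∞) :
    μ {y | μ (f ⁻¹' Iic (f y)) < u} = min u (μ univ) := by
  apply le_antisymm
  · refine le_min ?_ (measure_mono (subset_univ _))
    rcases eq_zero_or_pos u with rfl | hu₀
    · simp
    rcases le_or_gt (μ univ) u with hu | hu
    · exact (measure_mono (subset_univ _)).trans hu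
    obtain ⟨r, rfl⟩ := exists_measure_preimage_Iic_eq hcont hbot hu₀ hu
    exact measure_mono fun y hy => (monotone_measure_preimage_Iic.reflect_lt hy).le
  · refine le_of_forall_lt_imp_le_of_dense fun v hv => ?_
    obtain ⟨hvu, hvM⟩ := lt_min_iff.mp hv
    rcases eq_zero_or_pos v with rfl | hv₀
    · exact zero_le
    obtain ⟨r, rfl⟩ := exists_measure_preimage_Iic_eq hcont hbot hv₀ hvM
    exact measure_mono fun y hy => (monotone_measure_preimage_Iic hy).trans_lt hvu

theorem decRearrE_inv_measure_preimage_Iic (hcont : Continuous fun r => μ (f ⁻¹' Iic r))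
    (hbot : Tendsto (fun r => μ (f ⁻¹' Iic r)) atBot (𝓝 0)) {t : ℝ}
    (ht : ENNReal.ofReal t < μ univ) :
    decRearrE μ (fun y => (μ (f ⁻¹' Iic (f y)))⁻¹) t = (ENNReal.ofReal t)⁻¹ := by
  have hadm (s : ℝ≥0∞) : μ {y | s < (μ (f ⁻¹' Iic (f y)))⁻¹} ≤ ENNReal.ofReal t ↔
      (ENNReal.ofReal t)⁻¹ ≤ s := by
    simp only [ENNReal.lt_inv_iff_lt_inv (a := s), measure_measure_preimage_Iic_lt hcont hbot,
      min_le_iff, ht.not_ge, or_false, ENNReal.inv_le_iff_inv_le]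
  simp only [decRearrE, hadm]
  exact csInf_Ici

end DistributionFunction

section BallVolume

variable {M : Type*} [PseudoMetricSpace M]

theorem preimage_dist_Iic (x : M) (r : ℝ) : dist x ⁻¹' Iic r = closedBall x r :=
  ext fun _ => mem_closedBall'.symm

theorem tendsto_measure_closedBall_atBot [MeasurableSpace M] (μ : Measure M) (x : M) :
    Tendsto (fun r => μ (closedBall x r)) atBot (𝓝 0) :=
  tendsto_const_nhds.congr' <| (eventually_lt_atBot 0).mono fun r hr => by
    simp only [closedBall_eq_empty.mpr hr, measure_empty]

theorem rearrangement_inv_ball_volume_general [MeasurableSpace M] {μ : Measure M} {x : M}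
    (hcont : Continuous fun r => μ (closedBall x r)) {t : ℝ} (ht₀ : 0 < t)
    (ht : ENNReal.ofReal t < μ univ) :
    decRearrE μ (fun y => (μ (closedBall x (dist x y)))⁻¹) t = ENNReal.ofReal (1 / t) := by
  have hbot := tendsto_measure_closedBall_atBot μ x
  simp only [← preimage_dist_Iic] at hcont hbot ⊢
  rw [decRearrE_inv_measure_preimage_Iic hcont hbot ht, one_div, ENNReal.ofReal_inv_of_pos ht₀]

end BallVolume

/-- **Identity (2.6)**: on a metric measure space with finite, continuously varying ball volumes,
the decreasing rearrangement of `y ↦ 1/V_x(d(x,y))` at `t` equals `1/t`, for `0 < t < μ(M)`. -/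
theorem rearrangement_inv_ball_volume
    {M : Type*} [MetricSpace M] [MeasurableSpace M] [BorelSpace M] (μ : Measure M)
    (hfin : ∀ (x : M) (r : ℝ), μ (closedBall x r) ≠ ∞)
    (hcont : ∀ x : M, Continuous fun r : ℝ => (μ (closedBall x r)).toReal) :
    ∀ (x : M) (t : ℝ), 0 < t → ENNReal.ofReal t < μ Set.univ →
      decRearrE μ (fun y => (μ (closedBall x (dist x y)))⁻¹) t = ENNReal.ofReal (1 / t) :=
  fun x _ => rearrangement_inv_ball_volume_general <| by
    simpa only [ENNReal.ofReal_toReal (hfin x _)] using ENNReal.continuous_ofReal.comp' (hcont x)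
end
end

section
/- Let n ≥ 2 and p ≥ 1. There exists a constant C such that for every u ∈ C_c^∞(ℝ^n) with ‖∇u‖_n ≤ 1 one has ∫_{{|u| ≥ 1}} exp[ γ_{n,1}|u|^{n/(n−1)} ] / |u|^{p/(n−1)} dx ≤ C‖u‖_p^p, where γ_{n,1} = n·ω_{n−1}^{1/(n−1)} and ω_{n−1} is the surface measure of the unit sphere in ℝ^n. -/
/-!
The Brunn–Minkowski inequality, a consequence of the Prékopa–Leindler inequality, gives the
isoperimetric inequality `κ |A|^{1-1/n} ε ≤ |A_ε \ A|` up to `o(ε)`. Applied to the superlevel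
sets of `u`, it bounds `κ N(t)^{1-1/n} (t - s)` by `∫_{s ≤ |u| < t} |∇u|`, where `N` is the
distribution function of `|u|`. Hölder's inequality on thin layers turns this into the sharp
`n`-capacity estimate `γ (t - s)^{n/(n-1)} ≤ (G(t) - G(s))^{1/(n-1)} log (N(s) / N(t))`, where `G`
is the energy below a level.

Write the integrand at height `a` as `‖u‖_p^p e^{-F(a)} / N(a)`. By Chebyshev's inequality and the
capacity estimate the deficit `F` is bounded below, and a small deficit at a large height `a`
forces almost all of the energy to lie below `a`; above `a` the level sets can then shrink only a
little before the deficit grows. Hence, after splitting at one threshold height, `log N` oscillates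
by `O(X)` over the levels with `F ≤ X`. As in Garsia's argument, the set where `N(|u|) ≤ c` has
measure at most `c`, so the layer `j ≤ F < j + 1` contributes `O(j e^{-j}) ‖u‖_p^p`, which is
summable.
-/

open MeasureTheory Metric
open scoped ENNReal

noncomputable section

/-- `ω_{n-1} = 2π^{n/2}/Γ(n/2)`, the surface measure of the unit sphere in `ℝⁿ`. -/
def omegaSphere (n : ℕ) : ℝ := 2 * Real.pi ^ ((n : ℝ) / 2) / Real.Gamma ((n : ℝ) / 2)

/-- `γ_{n,1} = n ω_{n-1}^{1/(n-1)}`. -/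
def gammaN1 (n : ℕ) : ℝ := n * omegaSphere n ^ (1 / ((n : ℝ) - 1))

/-! ### Prékopa–Leindler and Brunn–Minkowski inequalities -/

section PrekopaLeindler

open scoped Pointwise

theorem volume_add_le_volume_add_of_isCompact {K L : Set ℝ} (hK : IsCompact K) (hL : IsCompact L)
    (hK₀ : K.Nonempty) (hL₀ : L.Nonempty) : volume K + volume L ≤ volume (K + L) := by
  obtain ⟨k, hkK, hk⟩ := hK.exists_isGreatest hK₀
  obtain ⟨l, hlL, hl⟩ := hL.exists_isLeast hL₀
  have hinter : (l +ᵥ K) ∩ (k +ᵥ L) ⊆ {k + l} := by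
    rintro _ ⟨⟨x, hx, rfl⟩, y, hy, hxy⟩
    have hxy : k + y = l + x := hxy
    have hx : x ≤ k := hk hx
    have hy : l ≤ y := hl hy
    change l + x = k + l
    linarith
  have hdisj : AEDisjoint volume (l +ᵥ K) (k +ᵥ L) :=
    measure_mono_null hinter Real.volume_singleton
  calc volume K + volume L = volume ((l +ᵥ K) ∪ (k +ᵥ L)) := by
        rw [measure_union₀ (hL.vadd k).measurableSet.nullMeasurableSet hdisj, measure_vadd,
          measure_vadd]
    _ ≤ volume (K + L) := by
        refine measure_mono (Set.union_subset ?_ ?_)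
        · rintro _ ⟨x, hx, rfl⟩
          exact ⟨x, hx, l, hlL, add_comm x l⟩
        · rintro _ ⟨y, hy, rfl⟩
          exact ⟨k, hkK, y, hy, rfl⟩

theorem volume_add_le_volume_add {A B : Set ℝ} (hA : MeasurableSet A) (hB : MeasurableSet B)
    (hA₀ : A.Nonempty) (hB₀ : B.Nonempty) : volume A + volume B ≤ volume (A + B) := by
  obtain ⟨a, ha⟩ := hA₀
  obtain ⟨b, hb⟩ := hB₀
  rw [hA.measure_eq_iSup_isCompact, hB.measure_eq_iSup_isCompact]
  simp only [iSup_and']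
  refine ENNReal.biSup_add_biSup_le' ⟨∅, by simp⟩ ⟨∅, by simp⟩ ?_
  rintro K ⟨hKA, hK⟩ L ⟨hLB, hL⟩
  calc volume K + volume L ≤ volume (insert a K) + volume (insert b L) := by
        gcongr <;> exact Set.subset_insert _ _
    _ ≤ volume (insert a K + insert b L) :=
        volume_add_le_volume_add_of_isCompact (hK.insert a) (hL.insert b) (by simp) (by simp)
    _ ≤ volume (A + B) := by
        gcongr
        exacts [Set.insert_subset ha hKA, Set.insert_subset hb hLB]

theorem ennreal_geom_mean_le_arith_mean2_weighted {a b : ℝ} (ha : 0 < a) (hb : 0 < b)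
    (hab : a + b = 1) (x y : ℝ≥0∞) :
    x ^ a * y ^ b ≤ ENNReal.ofReal a * x + ENNReal.ofReal b * y := by
  rcases eq_or_ne x ∞ with rfl | hx
  · simp [ENNReal.mul_top, ha]
  rcases eq_or_ne y ∞ with rfl | hy
  · simp [ENNReal.mul_top, hb]
  lift x to NNReal using hx
  lift y to NNReal using hy
  have hmean := NNReal.geom_mean_le_arith_mean2_weighted ⟨a, ha.le⟩ ⟨b, hb.le⟩ x y
    (NNReal.eq hab)
  rw [← ENNReal.coe_rpow_of_nonneg _ ha.le, ← ENNReal.coe_rpow_of_nonneg _ hb.le,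
    ENNReal.ofReal_eq_coe_nnreal ha.le, ENNReal.ofReal_eq_coe_nnreal hb.le]
  exact_mod_cast hmean

theorem lintegral_eq_setLIntegral_meas_lt_of_le_one {α : Type*} [MeasurableSpace α]
    (μ : Measure α) {f : α → ℝ≥0∞} (hf : Measurable f) (hf₁ : ∀ x, f x ≤ 1) :
    ∫⁻ x, f x ∂μ = ∫⁻ t in Set.Ioo (0 : ℝ) 1, μ {x | ENNReal.ofReal t < f x} := by
  have hf_top (x) : f x ≠ ∞ := ne_top_of_le_ne_top ENNReal.one_ne_top (hf₁ x)
  have htail (t : ℝ) (ht : t ∈ Set.Ici 1) : μ {x | t < (f x).toReal} = 0 := by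
    have : {x | t < (f x).toReal} = ∅ := Set.eq_empty_of_forall_notMem fun x hx =>
      (ENNReal.toReal_le_of_le_ofReal zero_le_one (by simpa using hf₁ x)).not_gt
        ((Set.mem_Ici.1 ht).trans_lt hx)
    rw [this, measure_empty]
  calc ∫⁻ x, f x ∂μ = ∫⁻ x, ENNReal.ofReal (f x).toReal ∂μ := by
        simp_rw [ENNReal.ofReal_toReal (hf_top _)]
    _ = ∫⁻ t in Set.Ioo 0 1 ∪ Set.Ici 1, μ {x | t < (f x).toReal} := by
        rw [Set.Ioo_union_Ici_eq_Ioi zero_lt_one]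
        exact lintegral_eq_lintegral_meas_lt μ (ae_of_all _ fun _ => ENNReal.toReal_nonneg)
          hf.ennreal_toReal.aemeasurable
    _ = ∫⁻ t in Set.Ioo 0 1, μ {x | t < (f x).toReal} := by
        rw [lintegral_union measurableSet_Ici
            (Set.disjoint_left.2 fun t ht ht' => not_le.2 ht.2 ht'),
          setLIntegral_congr_fun measurableSet_Ici htail, lintegral_zero, add_zero]
    _ = ∫⁻ t in Set.Ioo 0 1, μ {x | ENNReal.ofReal t < f x} :=
        setLIntegral_congr_fun measurableSet_Ioo fun t ht => by
          simp_rw [ENNReal.ofReal_lt_iff_lt_toReal ht.1.le (hf_top _)]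

/-- The Prékopa–Leindler inequality for the measure `μ` with the weights `a` and `b`. -/
def PrekopaLeindler {E : Type*} [AddCommGroup E] [Module ℝ E] [MeasurableSpace E] (μ : Measure E)
    (a b : ℝ) : Prop :=
  ∀ ⦃f g h : E → ℝ≥0∞⦄, Measurable f → Measurable g → Measurable h →
    (∀ x y, f x ^ a * g y ^ b ≤ h (a • x + b • y)) →
      (∫⁻ x, f x ∂μ) ^ a * (∫⁻ x, g x ∂μ) ^ b ≤ ∫⁻ x, h x ∂μ

variable {a b : ℝ} {f g h : ℝ → ℝ≥0∞}

/- All superlevel sets of `f` and `g` at levels below `1` are nonempty, so the one-dimensional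
Brunn–Minkowski inequality applies level by level. -/
theorem lintegral_add_lintegral_le_of_iSup_eq_one (ha : 0 < a) (hb : 0 < b) (hab : a + b = 1)
    (hf : Measurable f) (hg : Measurable g) (hh : Measurable h)
    (hf₁ : ⨆ x, f x = 1) (hg₁ : ⨆ x, g x = 1)
    (hfgh : ∀ x y, f x ^ a * g y ^ b ≤ h (a • x + b • y)) :
    ENNReal.ofReal a * (∫⁻ x, f x) + ENNReal.ofReal b * (∫⁻ x, g x) ≤ ∫⁻ x, h x := by
  have hmeas (k : ℝ → ℝ≥0∞) : Measurable fun t : ℝ => volume {x | ENNReal.ofReal t < k x} :=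
    Antitone.measurable fun s t hst => measure_mono fun x hx =>
      (ENNReal.ofReal_le_ofReal hst).trans_lt hx
  have hlevel : ∀ t ∈ Set.Ioo (0 : ℝ) 1,
      ENNReal.ofReal a * volume {x | ENNReal.ofReal t < f x} +
        ENNReal.ofReal b * volume {x | ENNReal.ofReal t < g x} ≤
      volume {x | ENNReal.ofReal t < min (h x) 1} := by
    intro t ht
    have ht₁ : ENNReal.ofReal t < 1 := by simpa using ht.2
    have hA₀ : {x | ENNReal.ofReal t < f x}.Nonempty := by rwa [← hf₁, lt_iSup_iff] at ht₁
    have hB₀ : {x | ENNReal.ofReal t < g x}.Nonempty := by rwa [← hg₁, lt_iSup_iff] at ht₁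
    have hA := measurableSet_lt (measurable_const (a := ENNReal.ofReal t)) hf
    have hB := measurableSet_lt (measurable_const (a := ENNReal.ofReal t)) hg
    have hvol {c : ℝ} (hc : 0 < c) (A : Set ℝ) :
        ENNReal.ofReal c * volume A = volume (c • A) := by
      rw [Measure.addHaar_smul, Module.finrank_self, pow_one, abs_of_pos hc]
    rw [hvol ha, hvol hb]
    refine (volume_add_le_volume_add (hA.const_smul_of_ne_zero ha.ne')
      (hB.const_smul_of_ne_zero hb.ne') hA₀.smul_set hB₀.smul_set).trans (measure_mono ?_)
    rintro _ ⟨_, ⟨x, hx, rfl⟩, _, ⟨y, hy, rfl⟩, rfl⟩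
    refine lt_min (lt_of_lt_of_le ?_ (hfgh x y)) ht₁
    calc ENNReal.ofReal t = ENNReal.ofReal t ^ a * ENNReal.ofReal t ^ b := by
          rw [← ENNReal.rpow_add_of_nonneg _ _ ha.le hb.le, hab, ENNReal.rpow_one]
      _ < f x ^ a * g y ^ b :=
          ENNReal.mul_lt_mul (ENNReal.rpow_lt_rpow hx ha) (ENNReal.rpow_lt_rpow hy hb)
  rw [lintegral_eq_setLIntegral_meas_lt_of_le_one _ hf fun x => hf₁ ▸ le_iSup f x,
    lintegral_eq_setLIntegral_meas_lt_of_le_one _ hg fun x => hg₁ ▸ le_iSup g x,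
    ← lintegral_const_mul _ (hmeas f), ← lintegral_const_mul _ (hmeas g),
    ← lintegral_add_left ((hmeas f).const_mul _)]
  refine (setLIntegral_mono' measurableSet_Ioo hlevel).trans ?_
  rw [← lintegral_eq_setLIntegral_meas_lt_of_le_one _ (hh.min measurable_const)
    fun x => min_le_right _ _]
  exact lintegral_mono fun x => min_le_left _ _

theorem lintegral_rpow_mul_lintegral_rpow_le_of_iSup_ne_top (ha : 0 < a) (hb : 0 < b)
    (hab : a + b = 1) (hf : Measurable f) (hg : Measurable g) (hh : Measurable h)
    (hf_top : ⨆ x, f x ≠ ∞) (hg_top : ⨆ x, g x ≠ ∞)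
    (hfgh : ∀ x y, f x ^ a * g y ^ b ≤ h (a • x + b • y)) :
    (∫⁻ x, f x) ^ a * (∫⁻ x, g x) ^ b ≤ ∫⁻ x, h x := by
  set S := ⨆ x, f x
  set T := ⨆ x, g x
  rcases eq_or_ne S 0 with hS₀ | hS₀
  · have : ∀ x, f x = 0 := by simpa [S] using hS₀
    simp [this, ha]
  rcases eq_or_ne T 0 with hT₀ | hT₀
  · have : ∀ x, g x = 0 := by simpa [T] using hT₀
    simp [this, hb]
  have hR₀ : S ^ a * T ^ b ≠ 0 := by simp [hS₀, hT₀, hf_top, hg_top]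
  have hR_top : S ^ a * T ^ b ≠ ∞ :=
    ENNReal.mul_ne_top (by simp [hS₀, hf_top]) (by simp [hT₀, hg_top])
  have hscale (x y : ℝ≥0∞) :
      (S⁻¹ * x) ^ a * (T⁻¹ * y) ^ b = (S ^ a * T ^ b)⁻¹ * (x ^ a * y ^ b) := by
    rw [ENNReal.mul_rpow_of_nonneg _ _ ha.le, ENNReal.mul_rpow_of_nonneg _ _ hb.le,
      ENNReal.mul_inv (.inl (by simp [hS₀, hf_top])) (.inr (by simp [hT₀, hg_top])),
      ENNReal.inv_rpow, ENNReal.inv_rpow, mul_mul_mul_comm]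
  have hnormalized := lintegral_add_lintegral_le_of_iSup_eq_one ha hb hab (hf.const_mul S⁻¹)
    (hg.const_mul T⁻¹) (hh.const_mul (S ^ a * T ^ b)⁻¹)
    (by rw [← ENNReal.mul_iSup, ENNReal.inv_mul_cancel hS₀ hf_top])
    (by rw [← ENNReal.mul_iSup, ENNReal.inv_mul_cancel hT₀ hg_top])
    (fun x y => by rw [hscale]; gcongr; exact hfgh x y)
  have hmean := (ennreal_geom_mean_le_arith_mean2_weighted ha hb hab _ _).trans hnormalized
  rwa [lintegral_const_mul _ hf, lintegral_const_mul _ hg, lintegral_const_mul _ hh, hscale,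
    ENNReal.mul_le_mul_iff_right (ENNReal.inv_ne_zero.2 hR_top) (ENNReal.inv_ne_top.2 hR₀)]
    at hmean

theorem lintegral_eq_iSup_lintegral_min_natCast {α : Type*} [MeasurableSpace α] (μ : Measure α)
    {f : α → ℝ≥0∞} (hf : Measurable f) :
    ∫⁻ x, f x ∂μ = ⨆ k : ℕ, ∫⁻ x, min (f x) k ∂μ := by
  rw [← lintegral_iSup (fun k => hf.min measurable_const)
    (fun i j hij x => min_le_min_left _ (by exact_mod_cast hij))]
  refine lintegral_congr fun x => ?_
  rw [← inf_iSup_eq, ENNReal.iSup_natCast, inf_top_eq]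

theorem prekopaLeindler_volume_real (ha : 0 < a) (hb : 0 < b) (hab : a + b = 1) :
    PrekopaLeindler (volume : Measure ℝ) a b := by
  intro f g h hf hg hh hfgh
  rw [lintegral_eq_iSup_lintegral_min_natCast _ hf, lintegral_eq_iSup_lintegral_min_natCast _ hg,
    ← ENNReal.orderIsoRpow_apply a ha, ← ENNReal.orderIsoRpow_apply b hb, OrderIso.map_iSup,
    OrderIso.map_iSup]
  simp only [ENNReal.iSup_mul, ENNReal.mul_iSup, iSup_le_iff]
  intro l k
  refine lintegral_rpow_mul_lintegral_rpow_le_of_iSup_ne_top ha hb hab (hf.min measurable_const)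
    (hg.min measurable_const) hh ?_ ?_ fun x y => le_trans ?_ (hfgh x y)
  · exact ne_top_of_le_ne_top (ENNReal.natCast_ne_top k) (iSup_le fun x => min_le_right _ _)
  · exact ne_top_of_le_ne_top (ENNReal.natCast_ne_top l) (iSup_le fun x => min_le_right _ _)
  · gcongr <;> exact min_le_left _ _

namespace PrekopaLeindler

variable {E F : Type*} [AddCommGroup E] [Module ℝ E] [MeasurableSpace E] [AddCommGroup F]
  [Module ℝ F] [MeasurableSpace F] {μ : Measure E} {ν : Measure F}

theorem dirac_zero [MeasurableSingletonClass E] : PrekopaLeindler (.dirac (0 : E)) a b := by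
  intro f g h hf hg hh hfgh
  simpa [hf, hg, hh] using hfgh 0 0

theorem smul (hμ : PrekopaLeindler μ a b) (ha : 0 ≤ a) (hb : 0 ≤ b) (hab : a + b = 1)
    (c : ℝ≥0∞) : PrekopaLeindler (c • μ) a b := by
  intro f g h hf hg hh hfgh
  simp only [lintegral_smul_measure, smul_eq_mul]
  calc (c * ∫⁻ x, f x ∂μ) ^ a * (c * ∫⁻ x, g x ∂μ) ^ b
      = c * ((∫⁻ x, f x ∂μ) ^ a * (∫⁻ x, g x ∂μ) ^ b) := by
        rw [ENNReal.mul_rpow_of_nonneg _ _ ha, ENNReal.mul_rpow_of_nonneg _ _ hb,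
          mul_mul_mul_comm, ← ENNReal.rpow_add_of_nonneg _ _ ha hb, hab, ENNReal.rpow_one]
    _ ≤ c * ∫⁻ x, h x ∂μ := by gcongr; exact hμ hf hg hh hfgh

theorem map (hμ : PrekopaLeindler μ a b) (L : E →ₗ[ℝ] F) (hL : Measurable L) :
    PrekopaLeindler (μ.map L) a b := by
  intro f g h hf hg hh hfgh
  rw [lintegral_map hf hL, lintegral_map hg hL, lintegral_map hh hL]
  exact hμ (hf.comp hL) (hg.comp hL) (hh.comp hL) fun x y => by simpa using hfgh (L x) (L y)

theorem prod [SFinite ν] (hμ : PrekopaLeindler μ a b) (hν : PrekopaLeindler ν a b) :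
    PrekopaLeindler (μ.prod ν) a b := by
  intro f g h hf hg hh hfgh
  rw [lintegral_prod _ hf.aemeasurable, lintegral_prod _ hg.aemeasurable,
    lintegral_prod _ hh.aemeasurable]
  exact hμ hf.lintegral_prod_right' hg.lintegral_prod_right' hh.lintegral_prod_right' fun x y =>
    hν (hf.comp measurable_prodMk_left) (hg.comp measurable_prodMk_left)
      (hh.comp measurable_prodMk_left) fun x' y' => hfgh (x, x') (y, y')

theorem volume_pi_fin (ha : 0 < a) (hb : 0 < b) (hab : a + b = 1) (n : ℕ) :
    PrekopaLeindler (volume : Measure (Fin n → ℝ)) a b := by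
  induction n with
  | zero =>
    rw [volume_pi, Measure.pi_of_empty _ 0]
    exact dirac_zero (E := Fin 0 → ℝ)
  | succ n ih =>
    have hcons := (volume_preserving_piFinSuccAbove (fun _ : Fin (n + 1) => ℝ) 0).symm
    have hcons_eq : ⇑(MeasurableEquiv.piFinSuccAbove (fun _ : Fin (n + 1) => ℝ) 0).symm =
        (Fin.consLinearEquiv ℝ fun _ => ℝ).toLinearMap :=
      funext fun z => Fin.insertNth_zero' z.1 z.2
    rw [← hcons.map_eq, hcons_eq]
    exact ((prekopaLeindler_volume_real ha hb hab).prod ih).map _ (hcons_eq ▸ hcons.measurable)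

end PrekopaLeindler

theorem measureReal_le_measureReal_add {G : Type*} [TopologicalSpace G] [AddGroup G]
    [IsTopologicalAddGroup G] [MeasurableSpace G] (μ : Measure G) [μ.IsAddLeftInvariant]
    [IsFiniteMeasureOnCompacts μ] {A B : Set G} (hA : IsCompact A) (hB : IsCompact B)
    (hA₀ : A.Nonempty) : μ.real B ≤ μ.real (A + B) := by
  obtain ⟨x, hx⟩ := hA₀
  refine ENNReal.toReal_mono (hA.add hB).measure_ne_top ?_
  rw [← measure_vadd μ x B]
  refine measure_mono ?_
  rintro _ ⟨y, hy, rfl⟩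
  exact Set.add_mem_add hx hy

variable {E : Type*} [NormedAddCommGroup E] [NormedSpace ℝ E] [FiniteDimensional ℝ E]
  [MeasurableSpace E] [BorelSpace E]

theorem prekopaLeindler_addHaar (ha : 0 < a) (hb : 0 < b) (hab : a + b = 1)
    (μ : Measure E) [μ.IsAddHaarMeasure] : PrekopaLeindler μ a b := by
  let L : (Fin (Module.finrank ℝ E) → ℝ) ≃L[ℝ] E := .ofFinrankEq (Module.finrank_fin_fun ℝ)
  rw [Measure.isAddLeftInvariant_eq_smul μ (volume.map L)]
  exact ((PrekopaLeindler.volume_pi_fin ha hb hab _).map L.toLinearMap L.continuous.measurable).smul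
    ha.le hb.le hab _

theorem measure_rpow_mul_measure_rpow_le (ha : 0 < a) (hb : 0 < b) (hab : a + b = 1)
    (μ : Measure E) [μ.IsAddHaarMeasure] {A B : Set E} (hA : MeasurableSet A)
    (hB : MeasurableSet B) : μ A ^ a * μ B ^ b ≤ μ (a • A + b • B) := by
  have hC := measurableSet_toMeasurable μ (a • A + b • B)
  rw [← measure_toMeasurable (a • A + b • B), ← lintegral_indicator_one hA,
    ← lintegral_indicator_one hB, ← lintegral_indicator_one hC]
  refine prekopaLeindler_addHaar ha hb hab μ (measurable_one.indicator hA)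
    (measurable_one.indicator hB) (measurable_one.indicator hC) fun x y => ?_
  by_cases hx : x ∈ A
  · by_cases hy : y ∈ B
    · have : a • x + b • y ∈ toMeasurable μ (a • A + b • B) := subset_toMeasurable _ _
        (Set.add_mem_add (Set.smul_mem_smul_set hx) (Set.smul_mem_smul_set hy))
      simp [hx, hy, this]
    · simp [hy, hb]
  · simp [hx, ha]

theorem measureReal_rpow_mul_measureReal_rpow_le (ha : 0 < a) (hb : 0 < b) (hab : a + b = 1)
    (μ : Measure E) [μ.IsAddHaarMeasure] {A B : Set E} (hA : IsCompact A) (hB : IsCompact B) :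
    μ.real A ^ a * μ.real B ^ b ≤ μ.real (a • A + b • B) := by
  simp only [Measure.real]
  rw [ENNReal.toReal_rpow, ENNReal.toReal_rpow, ← ENNReal.toReal_mul]
  exact ENNReal.toReal_mono ((hA.smul a).add (hB.smul b)).measure_ne_top
    (measure_rpow_mul_measure_rpow_le ha hb hab μ hA.measurableSet hB.measurableSet)

local notation "d" => Module.finrank ℝ E

theorem measureReal_smul_of_pos (μ : Measure E) [μ.IsAddHaarMeasure] {c : ℝ} (hc : 0 < c)
    (A : Set E) : μ.real (c • A) = c ^ d * μ.real A := by
  rw [measureReal_def, Measure.addHaar_smul, ENNReal.toReal_mul, abs_of_pos (by positivity),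
    ENNReal.toReal_ofReal (by positivity), measureReal_def]

theorem brunnMinkowski [Nontrivial E] (μ : Measure E) [μ.IsAddHaarMeasure] {A B : Set E}
    (hA : IsCompact A) (hB : IsCompact B) (hA₀ : A.Nonempty) (hB₀ : B.Nonempty) :
    (μ.real A ^ (d : ℝ)⁻¹ + μ.real B ^ (d : ℝ)⁻¹) ^ d ≤ μ.real (A + B) := by
  have hd : d ≠ 0 := Module.finrank_pos.ne'
  set α := μ.real A ^ (d : ℝ)⁻¹
  set β := μ.real B ^ (d : ℝ)⁻¹
  have hα : α ^ d = μ.real A := Real.rpow_inv_natCast_pow measureReal_nonneg hd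
  have hβ : β ^ d = μ.real B := Real.rpow_inv_natCast_pow measureReal_nonneg hd
  have hα₀ : 0 ≤ α := by positivity
  have hβ₀ : 0 ≤ β := by positivity
  rcases hα₀.eq_or_lt with hα₀ | hα₀
  · simpa [← hα₀, hβ] using measureReal_le_measureReal_add μ hA hB hA₀
  rcases hβ₀.eq_or_lt with hβ₀ | hβ₀
  · simpa [← hβ₀, hα, add_comm] using measureReal_le_measureReal_add μ hB hA hB₀
  have ha : 0 < α / (α + β) := by positivity
  have hb : 0 < β / (α + β) := by positivity
  have hab : α / (α + β) + β / (α + β) = 1 := by field_simp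
  have hmul := measureReal_rpow_mul_measureReal_rpow_le ha hb hab μ
    (hA.smul (α / (α + β))⁻¹) (hB.smul (β / (α + β))⁻¹)
  rw [smul_inv_smul₀ ha.ne', smul_inv_smul₀ hb.ne', measureReal_smul_of_pos μ (inv_pos.2 ha),
    measureReal_smul_of_pos μ (inv_pos.2 hb), ← hα, ← hβ, ← mul_pow, ← mul_pow] at hmul
  have hα' : (α / (α + β))⁻¹ * α = α + β := by field_simp
  have hβ' : (β / (α + β))⁻¹ * β = α + β := by field_simp
  rwa [hα', hβ', ← Real.rpow_add (by positivity), hab, Real.rpow_one] at hmul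

end PrekopaLeindler

/-! ### Isoperimetric and coarea inequalities -/

section Isoperimetric

open scoped Pointwise

variable {E : Type*} [NormedAddCommGroup E] [NormedSpace ℝ E] [MeasurableSpace E]

local notation "d" => Module.finrank ℝ E

/-- The constant in the isoperimetric inequality of a normed space: `n |B|^{1/n}` in `ℝⁿ`. -/
def isoConst (μ : Measure E) : ℝ := d * μ.real (closedBall 0 1) ^ (d : ℝ)⁻¹

variable [FiniteDimensional ℝ E] [Nontrivial E] (μ : Measure E) [μ.IsAddHaarMeasure]

theorem isoConst_pos : 0 < isoConst μ := by
  have hd : 0 < d := Module.finrank_pos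
  have hball : 0 < μ.real (closedBall 0 1) :=
    ENNReal.toReal_pos (measure_closedBall_pos μ 0 one_pos).ne' measure_closedBall_lt_top.ne
  unfold isoConst
  positivity

theorem measureReal_add_le_measureReal_cthickening [BorelSpace E] {A : Set E} (hA : IsCompact A)
    (hA₀ : A.Nonempty) {ε : ℝ} (hε : 0 ≤ ε) :
    μ.real A + ε * (isoConst μ * μ.real A ^ (1 - (d : ℝ)⁻¹)) ≤ μ.real (cthickening ε A) := by
  have hd : 0 < d := Module.finrank_pos
  set m := μ.real A
  set v := μ.real (closedBall (0 : E) 1)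
  have hm : (m ^ (d : ℝ)⁻¹) ^ d = m := Real.rpow_inv_natCast_pow measureReal_nonneg hd.ne'
  have hm' : (m ^ (d : ℝ)⁻¹) ^ (d - 1) = m ^ (1 - (d : ℝ)⁻¹) := by
    rw [← Real.rpow_mul_natCast measureReal_nonneg, Nat.cast_pred hd, mul_sub,
      inv_mul_cancel₀ (by positivity), mul_one]
  have hball : μ.real (closedBall (0 : E) ε) ^ (d : ℝ)⁻¹ = ε * v ^ (d : ℝ)⁻¹ := by
    rw [Measure.addHaar_real_closedBall' μ 0 hε, Real.mul_rpow (by positivity) measureReal_nonneg,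
      Real.pow_rpow_inv_natCast hε hd.ne']
  calc m + ε * (isoConst μ * m ^ (1 - (d : ℝ)⁻¹))
      = (m ^ (d : ℝ)⁻¹) ^ d + d * (m ^ (d : ℝ)⁻¹) ^ (d - 1) * (ε * v ^ (d : ℝ)⁻¹) := by
        rw [hm, hm', isoConst]
        ring
    _ ≤ (m ^ (d : ℝ)⁻¹ + ε * v ^ (d : ℝ)⁻¹) ^ d :=
        pow_add_mul_le_add_pow (by positivity) (by positivity) d
    _ ≤ μ.real (A + closedBall 0 ε) := by
        rw [← hball]
        exact brunnMinkowski μ hA (isCompact_closedBall 0 ε) hA₀ (nonempty_closedBall.2 hε)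
    _ = μ.real (cthickening ε A) := by rw [hA.add_closedBall_zero hε]

end Isoperimetric

/-- The distribution function `a ↦ μ {w ≥ a}`, with the junk value `0` where the superlevel set has
infinite measure. -/
def distributionFunction {α : Type*} [MeasurableSpace α] (μ : Measure α) (w : α → ℝ) (a : ℝ) : ℝ :=
  μ.real {x | a ≤ w x}

section Coarea

theorem setLIntegral_Ioc_meas_le_setLIntegral {α : Type*} [MeasurableSpace α] (μ : Measure α)
    [SFinite μ] {f g : α → ℝ} (hf : Measurable f) (hg : Measurable g) {s' s t : ℝ}
    (hfg : ∀ x, f x < s' → f x + g x ≤ s) :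
    ∫⁻ τ in Set.Ioc s t, μ {x | f x < τ ∧ τ ≤ f x + g x} ≤
      ∫⁻ x in {x | s' ≤ f x ∧ f x < t}, ENNReal.ofReal (g x) ∂μ := by
  set D : Set (ℝ × α) := {z | f z.2 < z.1 ∧ z.1 ≤ f z.2 + g z.2}
  have hD : MeasurableSet D := (measurableSet_lt (hf.comp measurable_snd) measurable_fst).inter
    (measurableSet_le measurable_fst ((hf.comp measurable_snd).add (hg.comp measurable_snd)))
  have hS : MeasurableSet {x | s' ≤ f x ∧ f x < t} :=
    (measurableSet_le measurable_const hf).inter (measurableSet_lt hf measurable_const)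
  rw [← lintegral_indicator hS]
  calc ∫⁻ τ in Set.Ioc s t, μ {x | f x < τ ∧ τ ≤ f x + g x}
      = ((volume.restrict (Set.Ioc s t)).prod μ) D := (Measure.prod_apply hD).symm
    _ = ∫⁻ x, volume.restrict (Set.Ioc s t) (Set.Ioc (f x) (f x + g x)) ∂μ :=
        Measure.prod_apply_symm hD
    _ ≤ _ := lintegral_mono fun x => ?_
  rw [Measure.restrict_apply measurableSet_Ioc, Set.Ioc_inter_Ioc]
  by_cases hx : s' ≤ f x ∧ f x < t
  · rw [Set.indicator_of_mem (by exact hx), Real.volume_Ioc]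
    refine ENNReal.ofReal_le_ofReal ?_
    linarith [min_le_left (f x + g x) t, le_max_left (f x) s]
  · rw [Set.indicator_of_notMem (by exact hx), Set.Ioc_eq_empty, measure_empty]
    rw [max_lt_iff, lt_min_iff, lt_min_iff]
    rintro ⟨⟨-, hft⟩, hs, -⟩
    exact hx ⟨not_lt.1 fun h => hs.not_ge (hfg x h), hft⟩

theorem isCompact_setOf_le_norm {X F : Type*} [TopologicalSpace X] [NormedAddCommGroup F]
    {u : X → F} (hu : Continuous u) (hc : HasCompactSupport u) {s : ℝ} (hs : 0 < s) :
    IsCompact {x | s ≤ ‖u x‖} := by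
  refine hc.isCompact.of_isClosed_subset (isClosed_le continuous_const hu.norm) fun x hx => ?_
  exact subset_tsupport u (norm_pos_iff.1 (hs.trans_le hx))

variable {E F : Type*} [NormedAddCommGroup E] [NormedSpace ℝ E]
  [NormedAddCommGroup F] [NormedSpace ℝ F] {u : E → F}

theorem exists_forall_norm_le_norm_add_mul (hu : ContDiff ℝ 1 u) (hc : HasCompactSupport u)
    {η : ℝ} (hη : 0 < η) :
    ∃ ε₀ > 0, ∀ ε ≤ ε₀, ∀ x y, dist y x ≤ ε → ‖u y‖ ≤ ‖u x‖ + ε * (‖fderiv ℝ u x‖ + η) := by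
  obtain ⟨δ, hδ, hfderiv⟩ := Metric.uniformContinuous_iff.1
    ((hc.fderiv ℝ).uniformContinuous_of_continuous (hu.continuous_fderiv one_ne_zero)) η hη
  refine ⟨δ / 2, by positivity, fun ε hε x y hyx => ?_⟩
  have hbound : ∀ z ∈ closedBall x ε, ‖fderiv ℝ u z‖ ≤ ‖fderiv ℝ u x‖ + η := fun z hz => by
    have hzx := hfderiv (a := z) (b := x) (by linarith [mem_closedBall.1 hz])
    rw [dist_eq_norm] at hzx
    linarith [norm_le_norm_add_norm_sub' (fderiv ℝ u z) (fderiv ℝ u x)]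
  have hmean : ‖u y - u x‖ ≤ (‖fderiv ℝ u x‖ + η) * ‖y - x‖ :=
    (convex_closedBall x ε).norm_image_sub_le_of_norm_fderiv_le
      (fun z _ => hu.differentiable one_ne_zero z) hbound
      (mem_closedBall_self (dist_nonneg.trans hyx)) hyx
  calc ‖u y‖ ≤ ‖u x‖ + ‖u y - u x‖ := norm_le_norm_add_norm_sub' _ _
    _ ≤ ‖u x‖ + (‖fderiv ℝ u x‖ + η) * ε := by
        rw [dist_eq_norm] at hyx
        gcongr
        exact hmean.trans (by gcongr)
    _ = ‖u x‖ + ε * (‖fderiv ℝ u x‖ + η) := by ring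

theorem integrable_norm_fderiv [MeasurableSpace E] [OpensMeasurableSpace E] {μ : Measure E}
    [IsFiniteMeasureOnCompacts μ] (hu : ContDiff ℝ 1 u) (hc : HasCompactSupport u) :
    Integrable (fun x => ‖fderiv ℝ u x‖) μ :=
  (hu.continuous_fderiv one_ne_zero).norm.integrable_of_hasCompactSupport (hc.fderiv ℝ).norm

variable [FiniteDimensional ℝ E] [Nontrivial E] [MeasurableSpace E] [BorelSpace E]
  (μ : Measure E) [μ.IsAddHaarMeasure]

local notation "d" => Module.finrank ℝ E

theorem ofReal_mul_rpow_le_measure (hu : ContDiff ℝ 1 u) (hc : HasCompactSupport u) {τ t ε η : ℝ}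
    (hτ : 0 < τ) (hτt : τ ≤ t) (ht : {x | t ≤ ‖u x‖}.Nonempty) (hε : 0 ≤ ε)
    (hmod : ∀ x y, dist y x ≤ ε → ‖u y‖ ≤ ‖u x‖ + ε * (‖fderiv ℝ u x‖ + η)) :
    ENNReal.ofReal (ε * (isoConst μ * distributionFunction μ (‖u ·‖) t ^ (1 - (d : ℝ)⁻¹))) ≤
      μ {x | ‖u x‖ < τ ∧ τ ≤ ‖u x‖ + ε * (‖fderiv ℝ u x‖ + η)} := by
  set A := {x | τ ≤ ‖u x‖}
  have hA : IsCompact A := isCompact_setOf_le_norm hu.continuous hc hτ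
  have htA : {x | t ≤ ‖u x‖} ⊆ A := fun x hx => hτt.trans hx
  have hiso := measureReal_add_le_measureReal_cthickening μ hA (ht.mono htA) hε
  have hcompl : cthickening ε A \ A ⊆ {x | ‖u x‖ < τ ∧ τ ≤ ‖u x‖ + ε * (‖fderiv ℝ u x‖ + η)} := by
    rintro x ⟨hx, hxA⟩
    rw [hA.cthickening_eq_biUnion_closedBall hε, Set.mem_iUnion₂] at hx
    obtain ⟨y, hy, hxy⟩ := hx
    exact ⟨not_le.1 hxA, le_trans hy (hmod x y (mem_closedBall_comm.1 hxy))⟩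
  have hd : (0 : ℝ) ≤ 1 - (d : ℝ)⁻¹ :=
    sub_nonneg.2 (inv_le_one_of_one_le₀ (by exact_mod_cast Module.finrank_pos))
  have hmono : distributionFunction μ (‖u ·‖) t ≤ μ.real A :=
    measureReal_mono htA hA.measure_ne_top
  have hdiff : ε * (isoConst μ * distributionFunction μ (‖u ·‖) t ^ (1 - (d : ℝ)⁻¹)) ≤
      μ.real (cthickening ε A \ A) := by
    rw [measureReal_sdiff (self_subset_cthickening A) hA.measurableSet
      hA.cthickening.measure_ne_top]
    have hc := (isoConst_pos μ).le
    have : ε * (isoConst μ * distributionFunction μ (‖u ·‖) t ^ (1 - (d : ℝ)⁻¹)) ≤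
        ε * (isoConst μ * μ.real A ^ (1 - (d : ℝ)⁻¹)) := by
      gcongr
      exact measureReal_nonneg
    linarith
  exact (ENNReal.ofReal_le_of_le_toReal hdiff).trans (measure_mono hcompl)

theorem ofReal_mul_sub_le_setLIntegral (hu : ContDiff ℝ 1 u) (hc : HasCompactSupport u)
    {s t ε η : ℝ} (hs : 0 < s) (ht : {x | t ≤ ‖u x‖}.Nonempty) (hε : 0 ≤ ε) (hη : 0 ≤ η)
    (hmod : ∀ x y, dist y x ≤ ε → ‖u y‖ ≤ ‖u x‖ + ε * (‖fderiv ℝ u x‖ + η))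
    (hsmall : ∀ x, ε * (‖fderiv ℝ u x‖ + η) ≤ η) :
    ENNReal.ofReal (ε * (isoConst μ * distributionFunction μ (‖u ·‖) t ^ (1 - (d : ℝ)⁻¹))) *
        ENNReal.ofReal (t - (s + η)) ≤
      ∫⁻ x in {x | s ≤ ‖u x‖ ∧ ‖u x‖ < t}, ENNReal.ofReal (ε * (‖fderiv ℝ u x‖ + η)) ∂μ := by
  set K := isoConst μ * distributionFunction μ (‖u ·‖) t ^ (1 - (d : ℝ)⁻¹)
  calc ENNReal.ofReal (ε * K) * ENNReal.ofReal (t - (s + η))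
      = ∫⁻ _ in Set.Ioc (s + η) t, ENNReal.ofReal (ε * K) := by
        rw [setLIntegral_const, Real.volume_Ioc]
    _ ≤ ∫⁻ τ in Set.Ioc (s + η) t,
          μ {x | ‖u x‖ < τ ∧ τ ≤ ‖u x‖ + ε * (‖fderiv ℝ u x‖ + η)} :=
        setLIntegral_mono' measurableSet_Ioc fun τ hτ => ofReal_mul_rpow_le_measure μ hu hc
          (by linarith [hτ.1]) hτ.2 ht hε hmod
    _ ≤ ∫⁻ x in {x | s ≤ ‖u x‖ ∧ ‖u x‖ < t}, ENNReal.ofReal (ε * (‖fderiv ℝ u x‖ + η)) ∂μ :=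
        setLIntegral_Ioc_meas_le_setLIntegral μ hu.continuous.norm.measurable
          (((hu.continuous_fderiv one_ne_zero).norm.measurable.add_const η).const_mul ε)
          fun x hx => by linarith [hsmall x]

theorem isoConst_mul_rpow_mul_sub_le_setIntegral_add (hu : ContDiff ℝ 1 u)
    (hc : HasCompactSupport u) {s t η : ℝ} (hs : 0 < s) (hη : 0 < η)
    (ht : {x | t ≤ ‖u x‖}.Nonempty) :
    isoConst μ * distributionFunction μ (‖u ·‖) t ^ (1 - (d : ℝ)⁻¹) * (t - (s + η)) ≤
      (∫ x in {x | s ≤ ‖u x‖ ∧ ‖u x‖ < t}, ‖fderiv ℝ u x‖ ∂μ) +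
        η * μ.real {x | s ≤ ‖u x‖ ∧ ‖u x‖ < t} := by
  set S := {x | s ≤ ‖u x‖ ∧ ‖u x‖ < t}
  set K := isoConst μ * distributionFunction μ (‖u ·‖) t ^ (1 - (d : ℝ)⁻¹)
  obtain ⟨ε₀, hε₀, hmod⟩ := exists_forall_norm_le_norm_add_mul hu hc hη
  obtain ⟨Λ, hΛ⟩ :=
    (hu.continuous_fderiv one_ne_zero).bounded_above_of_compact_support (hc.fderiv ℝ)
  have hΛ₀ : 0 < Λ + η := add_pos_of_nonneg_of_pos ((norm_nonneg _).trans (hΛ 0)) hη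
  obtain ⟨ε, hε, hεε₀, hεΛ⟩ : ∃ ε > 0, ε ≤ ε₀ ∧ ε * (Λ + η) ≤ η :=
    ⟨min ε₀ (η / (Λ + η)), by positivity, min_le_left _ _,
      (le_div_iff₀ hΛ₀).1 (min_le_right _ _)⟩
  have hK : 0 ≤ K :=
    mul_nonneg (isoConst_pos μ).le (Real.rpow_nonneg measureReal_nonneg _)
  have hS : μ S ≠ ∞ := ne_top_of_le_ne_top
    (isCompact_setOf_le_norm hu.continuous hc hs).measure_ne_top (measure_mono fun x hx => hx.1)
  have hint : IntegrableOn (fun x => ε * (‖fderiv ℝ u x‖ + η)) S μ :=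
    ((integrable_norm_fderiv hu hc).restrict.add (integrableOn_const hS)).const_mul ε
  have hlayers := ofReal_mul_sub_le_setLIntegral μ hu hc hs ht hε.le hη.le (hmod ε hεε₀)
    fun x => le_trans (by gcongr; exact hΛ x) hεΛ
  rw [← ofReal_integral_eq_lintegral_ofReal hint (ae_of_all _ fun x => by positivity),
    ← ENNReal.ofReal_mul (mul_nonneg hε.le hK),
    ENNReal.ofReal_le_ofReal_iff (integral_nonneg fun x => by positivity), integral_const_mul,
    mul_assoc] at hlayers
  have hle := le_of_mul_le_mul_left hlayers hε
  rwa [integral_add (integrable_norm_fderiv hu hc).restrict (integrableOn_const hS),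
    setIntegral_const, smul_eq_mul, mul_comm (μ.real S)] at hle

theorem isoConst_mul_rpow_mul_sub_le_setIntegral (hu : ContDiff ℝ 1 u) (hc : HasCompactSupport u)
    {s t : ℝ} (hs : 0 < s) (ht : {x | t ≤ ‖u x‖}.Nonempty) :
    isoConst μ * distributionFunction μ (‖u ·‖) t ^ (1 - (d : ℝ)⁻¹) * (t - s) ≤
      ∫ x in {x | s ≤ ‖u x‖ ∧ ‖u x‖ < t}, ‖fderiv ℝ u x‖ ∂μ := by
  set K := isoConst μ * distributionFunction μ (‖u ·‖) t ^ (1 - (d : ℝ)⁻¹)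
  set S := {x | s ≤ ‖u x‖ ∧ ‖u x‖ < t}
  have hleft : Filter.Tendsto (fun η : ℝ => K * (t - (s + η))) (nhdsWithin 0 (Set.Ioi 0))
      (nhds (K * (t - (s + 0)))) := tendsto_nhdsWithin_of_tendsto_nhds
    (Continuous.tendsto (by fun_prop) 0)
  have hright : Filter.Tendsto (fun η : ℝ => (∫ x in S, ‖fderiv ℝ u x‖ ∂μ) + η * μ.real S)
      (nhdsWithin 0 (Set.Ioi 0)) (nhds ((∫ x in S, ‖fderiv ℝ u x‖ ∂μ) + 0 * μ.real S)) :=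
    tendsto_nhdsWithin_of_tendsto_nhds (Continuous.tendsto (by fun_prop) 0)
  simpa using le_of_tendsto_of_tendsto hleft hright
    (eventually_nhdsWithin_of_forall fun η hη =>
      isoConst_mul_rpow_mul_sub_le_setIntegral_add μ hu hc hs hη ht)

end Coarea

/-! ### Capacity estimate -/

section Layers

theorem sum_rpow_inv_mul_rpow_inv_le {ι : Type*} (I : Finset ι) {p q : ℝ}
    (hpq : p.HolderConjugate q) {f g : ι → ℝ} (hf : ∀ i ∈ I, 0 ≤ f i) (hg : ∀ i ∈ I, 0 ≤ g i) :
    ∑ i ∈ I, f i ^ p⁻¹ * g i ^ q⁻¹ ≤ (∑ i ∈ I, f i) ^ p⁻¹ * (∑ i ∈ I, g i) ^ q⁻¹ := by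
  have hholder := Real.inner_le_Lp_mul_Lq_of_nonneg I hpq
    (fun i hi => Real.rpow_nonneg (hf i hi) p⁻¹) (fun i hi => Real.rpow_nonneg (hg i hi) q⁻¹)
  rwa [Finset.sum_congr rfl fun i hi => Real.rpow_inv_rpow (hf i hi) hpq.ne_zero,
    Finset.sum_congr rfl fun i hi => Real.rpow_inv_rpow (hg i hi) hpq.symm.ne_zero,
    one_div, one_div] at hholder

theorem exists_uniform_partition {s t : ℝ} (hst : s < t) (m : ℕ) :
    ∃ x : ℕ → ℝ, x 0 = s ∧ x (m + 1) = t ∧ StrictMono x ∧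
      ∀ i, x (i + 1) - x i = (t - s) / (m + 1) := by
  have hstep : 0 < (t - s) / (m + 1) := div_pos (sub_pos.2 hst) (by positivity)
  have hdiff : ∀ i : ℕ, s + ((i + 1 : ℕ) : ℝ) * ((t - s) / (m + 1)) -
      (s + i * ((t - s) / (m + 1))) = (t - s) / (m + 1) := fun i => by push_cast; ring
  refine ⟨fun i => s + i * ((t - s) / (m + 1)), by simp, ?_, strictMono_nat_of_lt_succ fun i => ?_,
    hdiff⟩
  · push_cast
    field_simp
    ring
  · exact sub_pos.1 ((hdiff i).symm ▸ hstep)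

variable {p q c s t : ℝ} {A B : ℝ → ℝ}

theorem mul_sub_mul_one_sub_le (hpq : p.HolderConjugate q) (hst : s < t)
    (hA : MonotoneOn A (Set.Icc s t)) (hB : MonotoneOn B (Set.Icc s t))
    (hlayer : ∀ a b, s ≤ a → a < b → b ≤ t →
      c * (b - a) * (1 - (B b - B a)) ≤ (A b - A a) ^ p⁻¹ * (B b - B a) ^ q⁻¹) (m : ℕ) :
    c * (t - s) * (1 - (B t - B s) / (m + 1)) ≤ (A t - A s) ^ p⁻¹ * (B t - B s) ^ q⁻¹ := by
  obtain ⟨x, hx₀, hxm, hx, hstep⟩ := exists_uniform_partition hst m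
  have hsx : ∀ i, s ≤ x i := fun i => hx₀ ▸ hx.monotone i.zero_le
  have hxt : ∀ i ≤ m + 1, x i ≤ t := fun i hi => hxm ▸ hx.monotone hi
  have hsum : ∀ H : ℝ → ℝ, ∑ i ∈ Finset.range (m + 1), (H (x (i + 1)) - H (x i)) = H t - H s :=
    fun H => by rw [Finset.sum_range_sub fun i => H (x i), hxm, hx₀]
  have hnonneg : ∀ {H : ℝ → ℝ}, MonotoneOn H (Set.Icc s t) →
      ∀ i ∈ Finset.range (m + 1), 0 ≤ H (x (i + 1)) - H (x i) := fun hH i hi => by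
    have hi := Finset.mem_range.1 hi
    exact sub_nonneg.2 (hH ⟨hsx i, hxt i hi.le⟩ ⟨hsx _, hxt _ hi⟩ (hx i.lt_succ_self).le)
  calc c * (t - s) * (1 - (B t - B s) / (m + 1))
      = ∑ i ∈ Finset.range (m + 1),
          c * (x (i + 1) - x i) * (1 - (B (x (i + 1)) - B (x i))) := by
        simp only [hstep]
        rw [← Finset.mul_sum, Finset.sum_sub_distrib, hsum, Finset.sum_const, Finset.card_range,
          nsmul_eq_mul]
        push_cast
        field_simp
    _ ≤ ∑ i ∈ Finset.range (m + 1),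
          (A (x (i + 1)) - A (x i)) ^ p⁻¹ * (B (x (i + 1)) - B (x i)) ^ q⁻¹ :=
        Finset.sum_le_sum fun i hi => hlayer _ _ (hsx i) (hx i.lt_succ_self)
          (hxt _ (Finset.mem_range.1 hi))
    _ ≤ (A t - A s) ^ p⁻¹ * (B t - B s) ^ q⁻¹ := by
        rw [← hsum A, ← hsum B]
        exact sum_rpow_inv_mul_rpow_inv_le _ hpq (hnonneg hA) (hnonneg hB)

theorem mul_sub_le_of_forall_layer (hpq : p.HolderConjugate q) (hst : s < t)
    (hA : MonotoneOn A (Set.Icc s t)) (hB : MonotoneOn B (Set.Icc s t))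
    (hlayer : ∀ a b, s ≤ a → a < b → b ≤ t →
      c * (b - a) * (1 - (B b - B a)) ≤ (A b - A a) ^ p⁻¹ * (B b - B a) ^ q⁻¹) :
    c * (t - s) ≤ (A t - A s) ^ p⁻¹ * (B t - B s) ^ q⁻¹ := by
  have hlim : Filter.Tendsto (fun m : ℕ => c * (t - s) * (1 - (B t - B s) / ((m : ℝ) + 1)))
      Filter.atTop (nhds (c * (t - s) * (1 - 0))) := by
    refine Filter.Tendsto.const_mul _ (Filter.Tendsto.const_sub _ ?_)
    exact_mod_cast (Filter.tendsto_add_atTop_iff_nat 1).2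
      (tendsto_const_div_atTop_nhds_zero_nat (B t - B s))
  rw [sub_zero, mul_one] at hlim
  exact le_of_tendsto' hlim (mul_sub_mul_one_sub_le hpq hst hA hB hlayer)

theorem mul_one_sub_log_div_le {x y k e : ℝ} (hq : 1 ≤ q) (hk : 0 ≤ k) (he : 0 ≤ e)
    (hy : 0 < y) (hyx : y ≤ x) (hle : k * y ^ q⁻¹ ≤ e ^ p⁻¹ * (x - y) ^ q⁻¹) :
    k * (1 - Real.log (x / y)) ≤ e ^ p⁻¹ * Real.log (x / y) ^ q⁻¹ := by
  have hx : 0 < x := hy.trans_le hyx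
  set l := Real.log (x / y)
  have hl : 0 ≤ l := Real.log_nonneg ((one_le_div hy).2 hyx)
  have hratio : y / x = Real.exp (-l) := by
    rw [Real.exp_neg, Real.exp_log (div_pos hx hy), inv_div]
  have hpow : 1 - l ≤ (y / x) ^ q⁻¹ := by
    rw [hratio, ← Real.exp_mul]
    have hlq : l * q⁻¹ ≤ l := mul_le_of_le_one_right hl (inv_le_one_of_one_le₀ hq)
    linarith [Real.add_one_le_exp (-l * q⁻¹)]
  have hlog : (x - y) / x ≤ l := by
    rw [sub_div, div_self hx.ne', hratio]
    linarith [Real.add_one_le_exp (-l)]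
  have hxy : 0 ≤ x - y := sub_nonneg.2 hyx
  calc k * (1 - l) ≤ k * (y / x) ^ q⁻¹ := by gcongr
    _ = k * y ^ q⁻¹ / x ^ q⁻¹ := by rw [Real.div_rpow hy.le hx.le, mul_div_assoc]
    _ ≤ e ^ p⁻¹ * (x - y) ^ q⁻¹ / x ^ q⁻¹ := by gcongr
    _ = e ^ p⁻¹ * ((x - y) / x) ^ q⁻¹ := by rw [Real.div_rpow hxy hx.le, mul_div_assoc]
    _ ≤ e ^ p⁻¹ * l ^ q⁻¹ := by
        have := hq.trans' zero_le_one
        gcongr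

end Layers

section DistributionFunction

variable {X F : Type*} [TopologicalSpace X] [MeasurableSpace X] [OpensMeasurableSpace X]
  [NormedAddCommGroup F] {μ : Measure X} [IsFiniteMeasureOnCompacts μ] {u : X → F}

theorem distributionFunction_sub (hu : Continuous u) (hc : HasCompactSupport u) {a b : ℝ}
    (ha : 0 < a) (hab : a ≤ b) :
    distributionFunction μ (‖u ·‖) a - distributionFunction μ (‖u ·‖) b =
      μ.real {x | a ≤ ‖u x‖ ∧ ‖u x‖ < b} := by
  have hlayer : {x | a ≤ ‖u x‖ ∧ ‖u x‖ < b} = {x | a ≤ ‖u x‖} \ {x | b ≤ ‖u x‖} := by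
    ext x
    simp
  have hsub : {x | b ≤ ‖u x‖} ⊆ {x | a ≤ ‖u x‖} := fun x hx => hab.trans hx
  rw [hlayer, measureReal_sdiff hsub (isClosed_le continuous_const hu.norm).measurableSet
    (isCompact_setOf_le_norm hu hc ha).measure_ne_top]
  rfl

theorem antitoneOn_distributionFunction_norm (hu : Continuous u) (hc : HasCompactSupport u) :
    AntitoneOn (distributionFunction μ (‖u ·‖)) (Set.Ioi 0) := fun _ ha _ _ hab =>
  sub_nonneg.1 (distributionFunction_sub (μ := μ) hu hc ha hab ▸ measureReal_nonneg)

end DistributionFunction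

section LevelEnergy

variable {E F : Type*} [NormedAddCommGroup E] [NormedSpace ℝ E] [MeasurableSpace E]
  [NormedAddCommGroup F] [NormedSpace ℝ F]

local notation "d" => Module.finrank ℝ E

/-- The conformal energy `∫ ‖∇u‖ⁿ`, `n = dim E`, of `u` below the level `a`. -/
def levelEnergy (μ : Measure E) (u : E → F) (a : ℝ) : ℝ :=
  ∫ x in {x | ‖u x‖ < a}, ‖fderiv ℝ u x‖ ^ (d : ℝ) ∂μ

variable {μ : Measure E} {u : E → F}

theorem levelEnergy_nonneg (a : ℝ) : 0 ≤ levelEnergy μ u a :=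
  integral_nonneg fun _ => by positivity

variable [OpensMeasurableSpace E] [IsFiniteMeasureOnCompacts μ] [Nontrivial E]
  [FiniteDimensional ℝ E]

theorem integrable_norm_fderiv_rpow_finrank (hu : ContDiff ℝ 1 u) (hc : HasCompactSupport u) :
    Integrable (fun x => ‖fderiv ℝ u x‖ ^ (d : ℝ)) μ := by
  have hd : (0 : ℝ) < d := by exact_mod_cast Module.finrank_pos
  refine Continuous.integrable_of_hasCompactSupport
    ((hu.continuous_fderiv one_ne_zero).norm.rpow_const fun _ => Or.inr hd.le) ?_
  exact (hc.fderiv ℝ).comp_left (g := fun z => ‖z‖ ^ (d : ℝ)) (by simp [Module.finrank_pos.ne'])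

theorem levelEnergy_le_integral (hu : ContDiff ℝ 1 u) (hc : HasCompactSupport u) (a : ℝ) :
    levelEnergy μ u a ≤ ∫ x, ‖fderiv ℝ u x‖ ^ (d : ℝ) ∂μ :=
  setIntegral_le_integral (integrable_norm_fderiv_rpow_finrank hu hc)
    (ae_of_all _ fun _ => by positivity)

theorem levelEnergy_sub (hu : ContDiff ℝ 1 u) (hc : HasCompactSupport u) {a b : ℝ} (hab : a ≤ b) :
    levelEnergy μ u b - levelEnergy μ u a =
      ∫ x in {x | a ≤ ‖u x‖ ∧ ‖u x‖ < b}, ‖fderiv ℝ u x‖ ^ (d : ℝ) ∂μ := by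
  have hint := integrable_norm_fderiv_rpow_finrank (μ := μ) hu hc
  have hlayer : {x | a ≤ ‖u x‖ ∧ ‖u x‖ < b} = {x | ‖u x‖ < b} \ {x | ‖u x‖ < a} := by
    ext x
    simp [and_comm]
  have hsub : {x | ‖u x‖ < a} ⊆ {x | ‖u x‖ < b} := fun x hx => lt_of_lt_of_le hx hab
  rw [hlayer, setIntegral_sdiff (isOpen_lt hu.continuous.norm continuous_const).measurableSet
    hint.integrableOn hsub]
  rfl

theorem monotone_levelEnergy (hu : ContDiff ℝ 1 u) (hc : HasCompactSupport u) :
    Monotone (levelEnergy μ u) := fun _ _ hab =>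
  sub_nonneg.1 (levelEnergy_sub (μ := μ) hu hc hab ▸ integral_nonneg fun _ => by positivity)

theorem setIntegral_norm_fderiv_le {r a b : ℝ} (hr : (d : ℝ).HolderConjugate r)
    (hu : ContDiff ℝ 1 u) (hc : HasCompactSupport u) (ha : 0 < a) (hab : a ≤ b) :
    ∫ x in {x | a ≤ ‖u x‖ ∧ ‖u x‖ < b}, ‖fderiv ℝ u x‖ ∂μ ≤
      (levelEnergy μ u b - levelEnergy μ u a) ^ (d : ℝ)⁻¹ *
        (distributionFunction μ (‖u ·‖) a - distributionFunction μ (‖u ·‖) b) ^ r⁻¹ := by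
  rw [levelEnergy_sub hu hc hab, distributionFunction_sub hu.continuous hc ha hab]
  set S := {x | a ≤ ‖u x‖ ∧ ‖u x‖ < b}
  have hS : μ S < ∞ := (measure_mono fun x hx => hx.1).trans_lt
    (isCompact_setOf_le_norm hu.continuous hc ha).measure_lt_top
  have : IsFiniteMeasure (μ.restrict S) := ⟨by simpa using hS⟩
  have hmem : MemLp (fun x => ‖fderiv ℝ u x‖) (ENNReal.ofReal d) (μ.restrict S) :=
    ((hu.continuous_fderiv one_ne_zero).memLp_of_hasCompactSupport (hc.fderiv ℝ)).norm.restrict _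
  simpa using integral_mul_le_Lp_mul_Lq_of_nonneg hr
    (ae_of_all _ fun x => norm_nonneg (fderiv ℝ u x)) (ae_of_all _ fun _ => zero_le_one) hmem
    (memLp_const 1)

end LevelEnergy

section Capacity

variable {E F : Type*} [NormedAddCommGroup E] [NormedSpace ℝ E] [MeasurableSpace E] [BorelSpace E]
  [NormedAddCommGroup F] [NormedSpace ℝ F] [Nontrivial E] [FiniteDimensional ℝ E]
  {μ : Measure E} [μ.IsAddHaarMeasure] {u : E → F}

local notation "d" => Module.finrank ℝ E

theorem isoConst_mul_sub_le {r s t : ℝ} (hr : (d : ℝ).HolderConjugate r) (hu : ContDiff ℝ 1 u)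
    (hc : HasCompactSupport u) (hs : 0 < s) (hst : s < t)
    (ht : 0 < distributionFunction μ (‖u ·‖) t) :
    isoConst μ * (t - s) ≤ (levelEnergy μ u t - levelEnergy μ u s) ^ (d : ℝ)⁻¹ *
      Real.log (distributionFunction μ (‖u ·‖) s / distributionFunction μ (‖u ·‖) t) ^ r⁻¹ := by
  set N := distributionFunction μ (‖u ·‖)
  have hanti : AntitoneOn N (Set.Ioi 0) := antitoneOn_distributionFunction_norm hu.continuous hc
  have hpos : ∀ a ∈ Set.Icc s t, 0 < N a := fun a ha =>
    ht.trans_le (hanti (hs.trans_le ha.1) (hs.trans hst) ha.2)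
  have hmono : MonotoneOn (fun a => -Real.log (N a)) (Set.Icc s t) := fun a ha b hb hab =>
    neg_le_neg (Real.log_le_log (hpos b hb) (hanti (hs.trans_le ha.1) (hs.trans_le hb.1) hab))
  have hlog : ∀ a ∈ Set.Icc s t, ∀ b ∈ Set.Icc s t,
      -Real.log (N b) - -Real.log (N a) = Real.log (N a / N b) := fun a ha b hb => by
    rw [Real.log_div (hpos a ha).ne' (hpos b hb).ne']
    ring
  rw [← hlog s (Set.left_mem_Icc.2 hst.le) t (Set.right_mem_Icc.2 hst.le)]
  refine mul_sub_le_of_forall_layer hr hst ((monotone_levelEnergy hu hc).monotoneOn _) hmono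
    fun a b ha hab hb => ?_
  have ha₀ : 0 < a := hs.trans_le ha
  have hNb : 0 < N b := hpos b ⟨ha.trans hab.le, hb⟩
  have hne : {x | b ≤ ‖u x‖}.Nonempty := Set.nonempty_iff_ne_empty.2 fun hempty =>
    hNb.ne' (by simp only [N, distributionFunction, hempty, measureReal_empty])
  rw [hlog a ⟨ha, hab.le.trans hb⟩ b ⟨ha.trans hab.le, hb⟩]
  refine mul_one_sub_log_div_le hr.symm.lt.le
    (mul_nonneg (isoConst_pos μ).le (sub_nonneg.2 hab.le))
    (sub_nonneg.2 (monotone_levelEnergy hu hc hab.le)) hNb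
    (hanti ha₀ (ha₀.trans hab) hab.le) ?_
  calc isoConst μ * (b - a) * N b ^ r⁻¹
      = isoConst μ * N b ^ (1 - (d : ℝ)⁻¹) * (b - a) := by
        rw [hr.one_sub_inv]
        ring
    _ ≤ ∫ x in {x | a ≤ ‖u x‖ ∧ ‖u x‖ < b}, ‖fderiv ℝ u x‖ ∂μ :=
        isoConst_mul_rpow_mul_sub_le_setIntegral μ hu hc ha₀ hne
    _ ≤ _ := setIntegral_norm_fderiv_le hr hu hc ha₀ hab.le

theorem isoConst_rpow_mul_sub_rpow_le {r s t : ℝ} (hr : (d : ℝ).HolderConjugate r)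
    (hu : ContDiff ℝ 1 u) (hc : HasCompactSupport u) (hs : 0 < s) (hst : s < t)
    (ht : 0 < distributionFunction μ (‖u ·‖) t) :
    isoConst μ ^ r * (t - s) ^ r ≤ (levelEnergy μ u t - levelEnergy μ u s) ^ (r - 1) *
      Real.log (distributionFunction μ (‖u ·‖) s / distributionFunction μ (‖u ·‖) t) := by
  have hΔ : 0 ≤ levelEnergy μ u t - levelEnergy μ u s :=
    sub_nonneg.2 (monotone_levelEnergy hu hc hst.le)
  have hlog := Real.log_nonneg ((one_le_div ht).2
    (antitoneOn_distributionFunction_norm (μ := μ) hu.continuous hc hs (hs.trans hst) hst.le))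
  have hiso := (isoConst_pos μ).le
  have hst' : 0 ≤ t - s := sub_nonneg.2 hst.le
  have hcap := Real.rpow_le_rpow (mul_nonneg hiso hst') (isoConst_mul_sub_le hr hu hc hs hst ht)
    hr.symm.nonneg
  rwa [Real.mul_rpow hiso hst', Real.mul_rpow (Real.rpow_nonneg hΔ _) (Real.rpow_nonneg hlog _),
    ← Real.rpow_mul hΔ, Real.rpow_inv_rpow hlog hr.symm.ne_zero, inv_mul_eq_div,
    hr.symm.div_conj_eq_sub_one] at hcap

end Capacity

/-! ### Level profiles and their deficit -/

section Levels

theorem rpow_sub_mul_le_sub_rpow {r a s : ℝ} (hr : 1 ≤ r) (ha : 0 < a) (hsa : s ≤ a) :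
    a ^ r - r * (a ^ (r - 1) * s) ≤ (a - s) ^ r := by
  have hratio : s / a ≤ 1 := (div_le_one ha).2 hsa
  have hbernoulli := one_add_mul_self_le_rpow_one_add (s := -(s / a)) (by linarith) hr
  calc a ^ r - r * (a ^ (r - 1) * s) = a ^ r * (1 + r * -(s / a)) := by
        rw [Real.rpow_sub_one ha.ne']
        field_simp
        ring
    _ ≤ a ^ r * (1 + -(s / a)) ^ r := by gcongr
    _ = (a - s) ^ r := by
        rw [← Real.mul_rpow ha.le (by linarith)]
        congr 1
        field_simp
        ring

theorem add_rpow_le_weighted {r e x y : ℝ} (hr : 1 ≤ r) (he : 0 < e) (he₁ : e < 1) (hx : 0 ≤ x)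
    (hy : 0 ≤ y) : (x + y) ^ r ≤ (1 - e) ^ (1 - r) * x ^ r + e ^ (1 - r) * y ^ r := by
  have he' : 0 < 1 - e := sub_pos.2 he₁
  have hconv := (convexOn_rpow hr).2 (x := x / (1 - e)) (div_nonneg hx he'.le) (y := y / e)
    (div_nonneg hy he.le) he'.le he.le (by ring)
  simp only [smul_eq_mul] at hconv
  rw [mul_div_cancel₀ _ he'.ne', mul_div_cancel₀ _ he.ne', Real.div_rpow hx he'.le,
    Real.div_rpow hy he.le] at hconv
  refine hconv.trans_eq ?_
  rw [Real.rpow_sub he', Real.rpow_sub he, Real.rpow_one, Real.rpow_one]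
  ring

theorem mul_le_one_sub_rpow_sub_one {k e : ℝ} (hk : 0 ≤ k) (he : e < 1) :
    k * e ≤ (1 - e) ^ (-k) - 1 := by
  have he' : 0 < 1 - e := sub_pos.2 he
  rw [Real.rpow_def_of_pos he']
  have hlog : k * Real.log (1 - e) ≤ k * (-e) := by
    gcongr
    linarith [Real.log_le_sub_one_of_pos he']
  linarith [Real.add_one_le_exp (Real.log (1 - e) * -k)]

theorem one_sub_rpow_neg_le {k e : ℝ} (hk : k ≤ 1) (he : 0 ≤ e) (he₂ : e ≤ 1 / 2) :
    (1 - e) ^ (-k) ≤ 1 + 2 * e := by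
  have he' : 0 < 1 - e := by linarith
  calc (1 - e) ^ (-k) ≤ (1 - e) ^ (-1 : ℝ) :=
        Real.rpow_le_rpow_of_exponent_ge he' (by linarith) (by linarith)
    _ = 1 / (1 - e) := by rw [Real.rpow_neg_one, one_div]
    _ ≤ 1 + 2 * e := by
        rw [div_le_iff₀ he']
        nlinarith

/-- A function seen only through its levels: `N` is its distribution function, `G` the normalized
energy below a level and `M` the integral of its `p`-th power. The field `capacity` is the
`n`-capacity estimate in terms of the single exponent `r = n / (n - 1)`, for which
`r - 1 = 1 / (n - 1)`. -/
structure LevelProfile (γ r p M : ℝ) (N G : ℝ → ℝ) : Prop where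
  antitoneOn : AntitoneOn N (Set.Ioi 0)
  monotone : Monotone G
  nonneg : ∀ a, 0 ≤ G a
  le_one : ∀ a, G a ≤ 1
  chebyshev : ∀ a, 0 < a → a ^ p * N a ≤ M
  capacity : ∀ s t, 0 < s → s < t → 0 < N t →
    γ * (t - s) ^ r ≤ (G t - G s) ^ (r - 1) * Real.log (N s / N t)

/-- The deficit `F`, defined so that
`exp (γ a ^ r) / a ^ (p (r - 1)) = M * exp (-F a) / N a`; see `exp_div_rpow_eq`. -/
def deficit (γ r p M : ℝ) (N : ℝ → ℝ) (a : ℝ) : ℝ :=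
  Real.log M - Real.log (N a) - γ * a ^ r + p * (r - 1) * Real.log a

/-- A bound for the negative part of the deficit. -/
def growthConst (γ r p : ℝ) : ℝ := γ * r + p * Real.log 2

theorem exp_div_rpow_eq {γ r p M a : ℝ} {N : ℝ → ℝ} (hM : 0 < M) (ha : 0 < a) (hN : 0 < N a) :
    Real.exp (γ * a ^ r) / a ^ (p * (r - 1)) = M * (Real.exp (-deficit γ r p M N a) / N a) := by
  have hneg : -deficit γ r p M N a =
      Real.log (N a) - Real.log M + γ * a ^ r - Real.log a * (p * (r - 1)) := by
    unfold deficit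
    ring
  rw [hneg, Real.exp_sub, Real.exp_add, Real.exp_sub, Real.exp_log hM, Real.exp_log hN,
    ← Real.rpow_def_of_pos ha]
  field_simp

namespace LevelProfile

variable {γ r p M : ℝ} {N G : ℝ → ℝ}

theorem pos (h : LevelProfile γ r p M N G) {a : ℝ} (ha : 0 < a) (hN : 0 < N a) : 0 < M :=
  (mul_pos (Real.rpow_pos_of_pos ha p) hN).trans_le (h.chebyshev a ha)

theorem log_add_log_le (h : LevelProfile γ r p M N G) {a : ℝ} (ha : 0 < a) (hN : 0 < N a) :
    p * Real.log a + Real.log (N a) ≤ Real.log M := by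
  have hap : 0 < a ^ p := Real.rpow_pos_of_pos ha p
  rw [← Real.log_rpow ha, ← Real.log_mul hap.ne' hN.ne']
  exact Real.log_le_log (mul_pos hap hN) (h.chebyshev a ha)

/- Comparing with the single lower level `a ^ (1 - r) / 2` is enough: at distance `s` from `a` the
power `a ^ r` drops by about `r a ^ (r - 1) s`, so this level is as far away as a bounded loss
allows. -/
theorem rpow_mul_sub_le_log_div (h : LevelProfile γ r p M N G) (hγ : 0 ≤ γ) (hr : 1 ≤ r)
    (hr₂ : r ≤ 2) {a θ : ℝ} (ha : 1 ≤ a) (hN : 0 < N a) (hθ : 1 / 2 ≤ θ) (hG : G a ≤ θ) :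
    θ ^ (1 - r) * (γ * a ^ r) - γ * r ≤ Real.log (N (a ^ (1 - r) / 2) / N a) := by
  have ha₀ : 0 < a := one_pos.trans_le ha
  have hθ₀ : 0 < θ := by linarith
  set s := a ^ (1 - r) / 2 with hs
  have hs₀ : 0 < s := by positivity
  have hsa : s < a := by
    linarith [Real.rpow_le_one_of_one_le_of_nonpos ha (by linarith : 1 - r ≤ 0)]
  have hslope : a ^ (r - 1) * s = 1 / 2 := by
    rw [hs, ← mul_div_assoc, ← Real.rpow_add ha₀]
    norm_num
  have hlog : 0 ≤ Real.log (N s / N a) :=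
    Real.log_nonneg ((one_le_div hN).2 (h.antitoneOn hs₀ ha₀ hsa.le))
  have hcap : γ * (a ^ r - r * (1 / 2)) ≤ θ ^ (r - 1) * Real.log (N s / N a) :=
    calc γ * (a ^ r - r * (1 / 2)) ≤ γ * (a - s) ^ r := by
          rw [← hslope]
          gcongr
          exact rpow_sub_mul_le_sub_rpow hr ha₀ hsa.le
      _ ≤ (G a - G s) ^ (r - 1) * Real.log (N s / N a) := h.capacity s a hs₀ hsa hN
      _ ≤ θ ^ (r - 1) * Real.log (N s / N a) := by
          have hΔ : 0 ≤ G a - G s := sub_nonneg.2 (h.monotone hsa.le)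
          gcongr
          linarith [h.nonneg s]
  have hθr : θ ^ (1 - r) ≤ 2 :=
    calc θ ^ (1 - r) ≤ (2⁻¹ : ℝ) ^ (1 - r) :=
          Real.rpow_le_rpow_of_nonpos (by norm_num) (by linarith) (by linarith)
      _ = 2 ^ (r - 1) := by rw [Real.inv_rpow zero_le_two, ← Real.rpow_neg zero_le_two, neg_sub]
      _ ≤ 2 := Real.rpow_le_self_of_one_le one_le_two (by linarith)
  have hloss : θ ^ (1 - r) * (γ * r) ≤ 2 * (γ * r) := by gcongr
  have hcancel : θ ^ (1 - r) * θ ^ (r - 1) = 1 := by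
    rw [← Real.rpow_add hθ₀]
    norm_num
  have hmul := mul_le_mul_of_nonneg_left hcap (Real.rpow_nonneg hθ₀.le (1 - r))
  rw [← mul_assoc (θ ^ (1 - r)) (θ ^ (r - 1)), hcancel, one_mul] at hmul
  linarith

theorem le_deficit (h : LevelProfile γ r p M N G) (hγ : 0 ≤ γ) (hr : 1 ≤ r) (hr₂ : r ≤ 2)
    {a θ : ℝ} (ha : 1 ≤ a) (hN : 0 < N a) (hθ : 1 / 2 ≤ θ) (hG : G a ≤ θ) :
    (θ ^ (1 - r) - 1) * (γ * a ^ r) - growthConst γ r p ≤ deficit γ r p M N a := by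
  have ha₀ : 0 < a := one_pos.trans_le ha
  have hs₀ : 0 < a ^ (1 - r) / 2 := by positivity
  have hsa : a ^ (1 - r) / 2 ≤ a := by
    linarith [Real.rpow_le_one_of_one_le_of_nonpos ha (by linarith : 1 - r ≤ 0)]
  have hNs : 0 < N (a ^ (1 - r) / 2) := hN.trans_le (h.antitoneOn hs₀ ha₀ hsa)
  have hdrop := h.rpow_mul_sub_le_log_div hγ hr hr₂ ha hN hθ hG
  have hcheb := h.log_add_log_le hs₀ hNs
  rw [Real.log_div hNs.ne' hN.ne'] at hdrop
  rw [Real.log_div (by positivity) two_ne_zero, Real.log_rpow ha₀] at hcheb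
  unfold deficit growthConst
  linarith

theorem neg_growthConst_le_deficit (h : LevelProfile γ r p M N G) (hγ : 0 ≤ γ) (hr : 1 ≤ r)
    (hr₂ : r ≤ 2) {a : ℝ} (ha : 1 ≤ a) (hN : 0 < N a) :
    -growthConst γ r p ≤ deficit γ r p M N a := by
  simpa using h.le_deficit hγ hr hr₂ ha hN (by norm_num) (h.le_one a)

theorem log_div_le_of_rpow_le (h : LevelProfile γ r p M N G) (hr : 1 ≤ r) (hp : 0 ≤ p)
    {a b A X : ℝ} (ha : 1 ≤ a) (hab : a ≤ b) (hN : 0 < N b) (hF : deficit γ r p M N b ≤ X)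
    (hb : γ * b ^ r ≤ A * X) : Real.log (N a / N b) ≤ (1 + A) * X := by
  have ha₀ : 0 < a := one_pos.trans_le ha
  have hNa : 0 < N a := hN.trans_le (h.antitoneOn ha₀ (ha₀.trans_le hab) hab)
  have hcheb := h.log_add_log_le ha₀ hNa
  have hlog : 0 ≤ p * Real.log a := mul_nonneg hp (Real.log_nonneg ha)
  have hlogb : 0 ≤ p * (r - 1) * Real.log b :=
    mul_nonneg (mul_nonneg hp (by linarith)) (Real.log_nonneg (ha.trans hab))
  rw [Real.log_div hNa.ne' hN.ne']
  unfold deficit at hF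
  linarith

theorem min_sub_mul_rpow_le (h : LevelProfile γ r p M N G) (hγ : 0 ≤ γ) (hr : 1 < r)
    (hr₂ : r ≤ 2) {a b X : ℝ} (ha : 1 ≤ a) (hN : 0 < N a)
    (hF : deficit γ r p M N a + growthConst γ r p ≤ X) :
    min (G b - G a) (1 / 2) * (γ * a ^ r) ≤ X / (r - 1) := by
  set e := min (G b - G a) (1 / 2)
  have he : e ≤ 1 / 2 := min_le_right _ _
  have hGa : G a ≤ 1 - e := by linarith [min_le_left (G b - G a) (1 / 2), h.le_one b]
  have hdef := h.le_deficit hγ hr.le hr₂ ha hN (θ := 1 - e) (by linarith) hGa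
  have hbern := mul_le_one_sub_rpow_sub_one (k := r - 1) (e := e) (by linarith) (by linarith)
  rw [neg_sub] at hbern
  have hγa : 0 ≤ γ * a ^ r := mul_nonneg hγ (Real.rpow_nonneg (zero_le_one.trans ha) r)
  rw [le_div_iff₀ (sub_pos.2 hr)]
  linarith [mul_le_mul_of_nonneg_right hbern hγa]

/-- Heights `a` count as large relative to a deficit bound `X` when `γ a ^ r` exceeds this multiple
of `X`. -/
def heightConst (r : ℝ) : ℝ := 2 * 2 ^ (r - 1)⁻¹ / (r - 1)

theorem heightConst_pos {r : ℝ} (hr : 1 < r) : 0 < heightConst r := by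
  have : 0 < r - 1 := sub_pos.2 hr
  unfold heightConst
  positivity

theorem energy_le_of_heightConst_le (h : LevelProfile γ r p M N G) (hγ : 0 ≤ γ) (hr : 1 < r)
    (hr₂ : r ≤ 2) {a b X : ℝ} (hX : 0 < X) (ha : 1 ≤ a) (hN : 0 < N a)
    (hF : deficit γ r p M N a + growthConst γ r p ≤ X) (haX : heightConst r * X ≤ γ * a ^ r) :
    (G b - G a) * (γ * a ^ r) ≤ X / (r - 1) ∧ 2 ^ (r - 1)⁻¹ * (G b - G a) ≤ 1 / 2 := by
  have hr' : 0 < r - 1 := sub_pos.2 hr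
  have hmin := h.min_sub_mul_rpow_le hγ hr hr₂ (b := b) ha hN hF
  have hpow : (2 : ℝ) ≤ 2 ^ (r - 1)⁻¹ :=
    Real.self_le_rpow_of_one_le one_le_two ((one_le_inv₀ hr').2 (by linarith))
  set e := min (G b - G a) (1 / 2) with he
  have hsmall : 2 ^ (r - 1)⁻¹ * e ≤ 1 / 2 := by
    rcases le_or_gt e 0 with he₀ | he₀
    · linarith [mul_nonpos_of_nonneg_of_nonpos (zero_le_two.trans hpow) he₀]
    · have hle := (mul_le_mul_of_nonneg_left haX he₀.le).trans hmin
      have hX' : 0 < X / (r - 1) := div_pos hX hr'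
      have hfac : e * (heightConst r * X) = 2 * (2 ^ (r - 1)⁻¹ * e) * (X / (r - 1)) := by
        unfold heightConst
        ring
      rw [hfac, mul_le_iff_le_one_left hX'] at hle
      linarith
  have heG : e = G b - G a := by
    refine min_eq_left (not_lt.1 fun hlt => ?_)
    rw [he, min_eq_right hlt.le] at hsmall
    linarith
  rw [← heG]
  exact ⟨hmin, hsmall⟩

/- Were the energy `δ = G b - G a` not `O(X / a ^ r)`, then `G a ≤ 1 - δ` would make the deficit at
`a` exceed `X`. Convexity then splits `b ^ r = (a + (b - a)) ^ r` with weights `1 - e` and `e`,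
where `e = 2 ^ (1 / (r - 1)) δ` is tuned so that the capacity estimate bounds the second term by
half of `log (N a / N b)`. -/
theorem rpow_le_rpow_add_log_div (h : LevelProfile γ r p M N G) (hγ : 0 < γ) (hr : 1 < r)
    (hr₂ : r ≤ 2) {a b X : ℝ} (hX : 0 < X) (ha : 1 ≤ a) (hab : a < b) (hN : 0 < N b)
    (hF : deficit γ r p M N a + growthConst γ r p ≤ X) (haX : heightConst r * X ≤ γ * a ^ r) :
    γ * b ^ r ≤ γ * a ^ r + heightConst r * X + Real.log (N a / N b) / 2 := by
  have ha₀ : 0 < a := one_pos.trans_le ha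
  have hr' : 0 < r - 1 := sub_pos.2 hr
  have hba : 0 < b - a := sub_pos.2 hab
  have hNa : 0 < N a := hN.trans_le (h.antitoneOn ha₀ (ha₀.trans hab) hab.le)
  obtain ⟨henergy, hsmall⟩ := h.energy_le_of_heightConst_le hγ.le hr hr₂ (b := b) hX ha hNa hF haX
  have hcap := h.capacity a b ha₀ hab hN
  set δ := G b - G a with hδ
  set c : ℝ := 2 ^ (r - 1)⁻¹ with hc
  set L := Real.log (N a / N b)
  have hc₀ : 0 < c := by positivity
  have hδ₀ : 0 < δ := (sub_nonneg.2 (h.monotone hab.le)).lt_of_ne fun h₀ => by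
    rw [hδ, ← h₀, Real.zero_rpow hr'.ne', zero_mul] at hcap
    exact hcap.not_gt (by positivity)
  have hsplit := add_rpow_le_weighted hr.le (mul_pos hc₀ hδ₀) (by linarith) ha₀.le hba.le
  rw [add_sub_cancel] at hsplit
  have hfirst : (1 - c * δ) ^ (1 - r) ≤ 1 + 2 * (c * δ) := by
    rw [← neg_sub r 1]
    exact one_sub_rpow_neg_le (by linarith) (mul_pos hc₀ hδ₀).le hsmall
  have hsecond : (c * δ) ^ (1 - r) * (δ ^ (r - 1) * L) = L / 2 := by
    rw [← neg_sub r 1, Real.rpow_neg (by positivity), Real.mul_rpow hc₀.le hδ₀.le, hc,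
      Real.rpow_inv_rpow zero_le_two hr'.ne']
    field_simp
  calc γ * b ^ r
      ≤ γ * ((1 - c * δ) ^ (1 - r) * a ^ r + (c * δ) ^ (1 - r) * (b - a) ^ r) := by gcongr
    _ = (1 - c * δ) ^ (1 - r) * (γ * a ^ r) + (c * δ) ^ (1 - r) * (γ * (b - a) ^ r) := by ring
    _ ≤ (1 + 2 * (c * δ)) * (γ * a ^ r) + (c * δ) ^ (1 - r) * (δ ^ (r - 1) * L) := by gcongr
    _ = γ * a ^ r + 2 * c * (δ * (γ * a ^ r)) + L / 2 := by
        rw [hsecond]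
        ring
    _ ≤ γ * a ^ r + 2 * c * (X / (r - 1)) + L / 2 := by gcongr
    _ = γ * a ^ r + heightConst r * X + L / 2 := by
        unfold heightConst
        ring

theorem log_div_le_of_le_rpow (h : LevelProfile γ r p M N G) (hγ : 0 < γ) (hr : 1 < r)
    (hr₂ : r ≤ 2) (hp : 0 ≤ p) {a b X : ℝ} (hX : 0 < X) (ha : 1 ≤ a) (hab : a < b) (hN : 0 < N b)
    (hFa : deficit γ r p M N a + growthConst γ r p ≤ X)
    (hFb : deficit γ r p M N b + growthConst γ r p ≤ X) (haX : heightConst r * X ≤ γ * a ^ r) :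
    Real.log (N a / N b) ≤ 2 * (1 + heightConst r) * X := by
  have ha₀ : 0 < a := one_pos.trans_le ha
  have hNa : 0 < N a := hN.trans_le (h.antitoneOn ha₀ (ha₀.trans hab) hab.le)
  have hgrowth := h.rpow_le_rpow_add_log_div hγ hr hr₂ hX ha hab hN hFa haX
  have hdef := h.neg_growthConst_le_deficit hγ.le hr.le hr₂ ha hNa
  have hlog : p * (r - 1) * Real.log a ≤ p * (r - 1) * Real.log b := by
    have : 0 ≤ r - 1 := sub_nonneg.2 hr.le
    gcongr
  rw [Real.log_div hNa.ne' hN.ne'] at hgrowth ⊢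
  unfold deficit at hdef hFb
  linarith

theorem log_div_le (h : LevelProfile γ r p M N G) (hγ : 0 < γ) (hr : 1 < r) (hr₂ : r ≤ 2)
    (hp : 0 ≤ p) {a b X : ℝ} (hX : 0 < X) (ha : 1 ≤ a) (hb : 1 ≤ b) (hNa : 0 < N a) (hNb : 0 < N b)
    (hFa : deficit γ r p M N a + growthConst γ r p ≤ X)
    (hFb : deficit γ r p M N b + growthConst γ r p ≤ X)
    (hab : γ * a ^ r ≤ heightConst r * X ↔ γ * b ^ r ≤ heightConst r * X) :
    Real.log (N a / N b) ≤ 2 * (1 + heightConst r) * X := by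
  have hA := heightConst_pos hr
  rcases le_or_gt b a with hba | hlt
  · have hle : N a / N b ≤ 1 :=
      (div_le_one hNb).2 (h.antitoneOn (one_pos.trans_le hb) (one_pos.trans_le ha) hba)
    exact (Real.log_nonpos (div_pos hNa hNb).le hle).trans (by positivity)
  rcases le_or_gt (γ * a ^ r) (heightConst r * X) with hlow | hhigh
  · have hC : 0 ≤ growthConst γ r p := by
      unfold growthConst
      have := Real.log_nonneg one_le_two
      positivity
    refine (h.log_div_le_of_rpow_le hr.le hp ha hlt.le hNb (by linarith) (hab.1 hlow)).trans ?_
    nlinarith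
  · exact h.log_div_le_of_le_rpow hγ hr hr₂ hp hX ha hlt hNb hFa hFb hhigh.le

end LevelProfile

end Levels

/-! ### Summation over deficit layers -/

section Garsia

variable {α : Type*} [MeasurableSpace α] {μ : Measure α}

theorem measurable_distributionFunction_comp {w : α → ℝ} (hw : Measurable w) :
    Measurable fun x => distributionFunction μ w (w x) := by
  have hanti : Antitone fun a => μ {x | a ≤ w x} := fun a b hab =>
    measure_mono fun x hx => hab.trans hx
  exact (hanti.measurable.comp hw).ennreal_toReal

theorem measure_setOf_distributionFunction_le {w : α → ℝ} {T : ℝ} (hT : μ {x | T ≤ w x} ≠ ∞)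
    (c : ℝ) : μ {x | T ≤ w x ∧ distributionFunction μ w (w x) ≤ c} ≤ ENNReal.ofReal c := by
  set I := {a | T ≤ a ∧ distributionFunction μ w a ≤ c}
  have hI : ∀ a ∈ I, μ {x | a ≤ w x} ≤ ENNReal.ofReal c := fun a ha =>
    (ENNReal.le_ofReal_iff_toReal_le
      (ne_top_of_le_ne_top hT (measure_mono fun x hx => ha.1.trans hx))
      (measureReal_nonneg.trans ha.2)).2 ha.2
  have hbdd : BddBelow I := ⟨T, fun a ha => ha.1⟩
  rcases I.eq_empty_or_nonempty with hempty | hne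
  · rw [show {x | T ≤ w x ∧ distributionFunction μ w (w x) ≤ c} = w ⁻¹' I from rfl, hempty]
    simp
  by_cases hmin : sInf I ∈ I
  · exact (measure_mono fun x hx => csInf_le hbdd (a := w x) hx).trans (hI _ hmin)
  obtain ⟨a, hanti, hlim, haI⟩ := exists_seq_tendsto_sInf hne hbdd
  have hcover : {x | T ≤ w x ∧ distributionFunction μ w (w x) ≤ c} ⊆ ⋃ k, {x | a k ≤ w x} := by
    intro x hx
    have hlt : sInf I < w x := (csInf_le hbdd hx).lt_of_ne fun h => hmin (h ▸ hx)
    obtain ⟨k, hk⟩ := (hlim.eventually_lt_const hlt).exists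
    exact Set.mem_iUnion.2 ⟨k, hk.le⟩
  have hmono : Monotone fun k => {x | a k ≤ w x} := fun i j hij x hx => (hanti hij).trans hx
  calc μ {x | T ≤ w x ∧ distributionFunction μ w (w x) ≤ c} ≤ μ (⋃ k, {x | a k ≤ w x}) :=
        measure_mono hcover
    _ = ⨆ k, μ {x | a k ≤ w x} := hmono.measure_iUnion
    _ ≤ ENNReal.ofReal c := iSup_le fun k => hI _ (haI k)

theorem setLIntegral_inv_le_of_floor_log_eq {m : α → ℝ} {Y : Set α} (hY : MeasurableSet Y)
    (hpos : ∀ x ∈ Y, 0 < m x) (hrank : ∀ c, μ {x | x ∈ Y ∧ m x ≤ c} ≤ ENNReal.ofReal c) {k : ℤ}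
    (hk : ∀ x ∈ Y, ⌊Real.log (m x)⌋ = k) :
    ∫⁻ x in Y, ENNReal.ofReal (m x)⁻¹ ∂μ ≤ ENNReal.ofReal (Real.exp 1) := by
  have hlower : ∀ x ∈ Y, ENNReal.ofReal (m x)⁻¹ ≤ ENNReal.ofReal (Real.exp (-k)) := fun x hx => by
    rw [Real.exp_neg]
    gcongr
    rw [← Real.le_log_iff_exp_le (hpos x hx), ← hk x hx]
    exact Int.floor_le _
  have hupper : ∀ x ∈ Y, m x ≤ Real.exp (k + 1) := fun x hx => by
    rw [← Real.log_le_iff_le_exp (hpos x hx), ← hk x hx]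
    exact (Int.lt_floor_add_one _).le
  calc ∫⁻ x in Y, ENNReal.ofReal (m x)⁻¹ ∂μ
      ≤ ∫⁻ _ in Y, ENNReal.ofReal (Real.exp (-k)) ∂μ := setLIntegral_mono' hY hlower
    _ = ENNReal.ofReal (Real.exp (-k)) * μ Y := setLIntegral_const _ _
    _ ≤ ENNReal.ofReal (Real.exp (-k)) * ENNReal.ofReal (Real.exp (k + 1)) := by
        gcongr
        exact (measure_mono fun x hx => And.intro hx (hupper x hx)).trans (hrank _)
    _ = ENNReal.ofReal (Real.exp 1) := by
        rw [← ENNReal.ofReal_mul (Real.exp_pos _).le, ← Real.exp_add, neg_add_cancel_left]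

theorem card_Icc_floor_floor_le {a b : ℝ} (hab : a ≤ b) :
    ((Finset.Icc ⌊a⌋ ⌊b⌋).card : ℝ) ≤ b - a + 2 := by
  have hcard : ((Finset.Icc ⌊a⌋ ⌊b⌋).card : ℤ) = ⌊b⌋ + 1 - ⌊a⌋ :=
    Int.card_Icc_of_le _ _ ((Int.floor_le_floor hab).trans (Int.le_add_one le_rfl))
  have hcard' : ((Finset.Icc ⌊a⌋ ⌊b⌋).card : ℝ) = ⌊b⌋ + 1 - ⌊a⌋ := by exact_mod_cast hcard
  linarith [Int.floor_le b, Int.lt_floor_add_one a]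

theorem setLIntegral_inv_le_of_log_div_le {m : α → ℝ} (hm : Measurable m) {Y : Set α}
    (hY : MeasurableSet Y) (hpos : ∀ x ∈ Y, 0 < m x)
    (hrank : ∀ c, μ {x | x ∈ Y ∧ m x ≤ c} ≤ ENNReal.ofReal c) {L : ℝ} (hL : 0 ≤ L)
    (hosc : ∀ x ∈ Y, ∀ y ∈ Y, Real.log (m x / m y) ≤ L) :
    ∫⁻ x in Y, ENNReal.ofReal (m x)⁻¹ ∂μ ≤ ENNReal.ofReal (Real.exp 1 * (2 * L + 2)) := by
  rcases Y.eq_empty_or_nonempty with rfl | ⟨x₀, hx₀⟩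
  · simp
  set l := Real.log (m x₀)
  have hlog : ∀ x ∈ Y, l - L ≤ Real.log (m x) ∧ Real.log (m x) ≤ l + L := fun x hx => by
    have hdown := hosc x₀ hx₀ x hx
    have hup := hosc x hx x₀ hx₀
    rw [Real.log_div (hpos _ ‹_›).ne' (hpos _ ‹_›).ne'] at hdown hup
    exact ⟨by linarith, by linarith⟩
  let Z : ℤ → Set α := fun k => {x | x ∈ Y ∧ ⌊Real.log (m x)⌋ = k}
  have hZ : ∀ k, MeasurableSet (Z k) := fun k =>
    hY.inter ((Int.measurable_floor.comp (Real.measurable_log.comp hm)) (measurableSet_singleton k))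
  set I := Finset.Icc ⌊l - L⌋ ⌊l + L⌋
  have hcover : Y ⊆ ⋃ k : I, Z k := fun x hx =>
    Set.mem_iUnion.2 ⟨⟨_, Finset.mem_Icc.2 ⟨Int.floor_le_floor (hlog x hx).1,
      Int.floor_le_floor (hlog x hx).2⟩⟩, hx, rfl⟩
  have hslice : ∀ k, ∫⁻ x in Z k, ENNReal.ofReal (m x)⁻¹ ∂μ ≤ ENNReal.ofReal (Real.exp 1) :=
    fun k => setLIntegral_inv_le_of_floor_log_eq (hZ k) (fun x hx => hpos x hx.1)
      (fun c => (measure_mono fun x hx => And.intro hx.1.1 hx.2).trans (hrank c)) fun x hx => hx.2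
  calc ∫⁻ x in Y, ENNReal.ofReal (m x)⁻¹ ∂μ
      ≤ ∫⁻ x in ⋃ k : I, Z k, ENNReal.ofReal (m x)⁻¹ ∂μ := lintegral_mono_set hcover
    _ ≤ ∑' k : I, ∫⁻ x in Z k, ENNReal.ofReal (m x)⁻¹ ∂μ := lintegral_iUnion_le _ _
    _ ≤ ∑' _ : I, ENNReal.ofReal (Real.exp 1) := ENNReal.tsum_le_tsum fun k => hslice k
    _ = ENNReal.ofReal (Real.exp 1 * I.card) := by
        rw [Finset.tsum_subtype I fun _ => ENNReal.ofReal (Real.exp 1), Finset.sum_const,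
          nsmul_eq_mul, ENNReal.ofReal_mul (Real.exp_pos _).le, ENNReal.ofReal_natCast, mul_comm]
    _ ≤ ENNReal.ofReal (Real.exp 1 * (2 * L + 2)) := by
        gcongr
        linarith [card_Icc_floor_floor_le (by linarith : l - L ≤ l + L)]

/-- The bound for the part of the integral in `setLIntegral_exp_neg_div_le` where `⌊Φ⌋ = j`. -/
def garsiaTerm (D : ℝ) (j : ℕ) : ℝ :=
  2 * (Real.exp (-j) * (Real.exp 1 * (2 * (D * (j + 1)) + 2)))

/-- The constant in `setLIntegral_exp_neg_div_le`. -/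
def garsiaConst (D : ℝ) : ℝ := ∑' j, garsiaTerm D j

theorem garsiaTerm_pos {D : ℝ} (hD : 0 ≤ D) (j : ℕ) : 0 < garsiaTerm D j := by
  unfold garsiaTerm
  positivity

theorem summable_garsiaTerm (D : ℝ) : Summable (garsiaTerm D) := by
  have hconst := (Real.summable_pow_mul_exp_neg_nat_mul 0 one_pos).mul_left
    (Real.exp 1 * (4 * D + 4))
  have hlin := (Real.summable_pow_mul_exp_neg_nat_mul 1 one_pos).mul_left (Real.exp 1 * (4 * D))
  refine (hconst.add hlin).congr fun j => ?_
  simp only [garsiaTerm, neg_mul, one_mul, pow_zero, pow_one]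
  ring

theorem garsiaConst_pos {D : ℝ} (hD : 0 ≤ D) : 0 < garsiaConst D :=
  (summable_garsiaTerm D).tsum_pos (fun j => (garsiaTerm_pos hD j).le) 0 (garsiaTerm_pos hD 0)

theorem setLIntegral_exp_neg_div_le_of_log_div_le {m Φ : α → ℝ} (hm : Measurable m) {Y : Set α}
    (hY : MeasurableSet Y) (hpos : ∀ x ∈ Y, 0 < m x)
    (hrank : ∀ c, μ {x | x ∈ Y ∧ m x ≤ c} ≤ ENNReal.ofReal c) {j L : ℝ} (hj : ∀ x ∈ Y, j ≤ Φ x)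
    (hL : 0 ≤ L) (hosc : ∀ x ∈ Y, ∀ y ∈ Y, Real.log (m x / m y) ≤ L) :
    ∫⁻ x in Y, ENNReal.ofReal (Real.exp (-Φ x) / m x) ∂μ ≤
      ENNReal.ofReal (Real.exp (-j) * (Real.exp 1 * (2 * L + 2))) :=
  calc ∫⁻ x in Y, ENNReal.ofReal (Real.exp (-Φ x) / m x) ∂μ
      ≤ ∫⁻ x in Y, ENNReal.ofReal (Real.exp (-j)) * ENNReal.ofReal (m x)⁻¹ ∂μ := by
        refine setLIntegral_mono' hY fun x hx => ?_
        rw [← ENNReal.ofReal_mul (Real.exp_pos _).le, div_eq_mul_inv]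
        have := hpos x hx
        gcongr
        exact hj x hx
    _ = ENNReal.ofReal (Real.exp (-j)) * ∫⁻ x in Y, ENNReal.ofReal (m x)⁻¹ ∂μ :=
        lintegral_const_mul' _ _ ENNReal.ofReal_ne_top
    _ ≤ ENNReal.ofReal (Real.exp (-j)) * ENNReal.ofReal (Real.exp 1 * (2 * L + 2)) := by
        gcongr
        exact setLIntegral_inv_le_of_log_div_le hm hY hpos hrank hL hosc
    _ = ENNReal.ofReal (Real.exp (-j) * (Real.exp 1 * (2 * L + 2))) :=
        (ENNReal.ofReal_mul (Real.exp_pos _).le).symm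

/- On the layer `⌊Φ⌋ = j` the values of `log m` spread over an interval of length `O(j)`, over which
`∫ 1 / m` is `O(j)` because `m` is a rank function; the factor `exp (-j)` makes the sum converge.
The sets `P X` allow each layer to be cut in two before its oscillation is measured. -/
theorem setLIntegral_exp_neg_div_le {m Φ : α → ℝ} (hm : Measurable m) (hΦ : Measurable Φ)
    {S : Set α} (hS : MeasurableSet S) (hpos : ∀ x ∈ S, 0 < m x) (hΦ₀ : ∀ x ∈ S, 0 ≤ Φ x)
    (hrank : ∀ c, μ {x | x ∈ S ∧ m x ≤ c} ≤ ENNReal.ofReal c) {P : ℝ → Set α}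
    (hP : ∀ X, MeasurableSet (P X)) {D : ℝ} (hD : 0 ≤ D)
    (hosc : ∀ X > 0, ∀ x ∈ S, ∀ y ∈ S, Φ x ≤ X → Φ y ≤ X → (x ∈ P X ↔ y ∈ P X) →
      Real.log (m x / m y) ≤ D * X) :
    ∫⁻ x in S, ENNReal.ofReal (Real.exp (-Φ x) / m x) ∂μ ≤ ENNReal.ofReal (garsiaConst D) := by
  let Y : ℕ → Set α := fun j => {x | x ∈ S ∧ j ≤ Φ x ∧ Φ x < j + 1}
  have hY : ∀ j, MeasurableSet (Y j) := fun j =>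
    hS.inter ((measurableSet_le measurable_const hΦ).inter (measurableSet_lt hΦ measurable_const))
  have hpiece : ∀ (j : ℕ) (Q : Set α), MeasurableSet Q →
      (∀ x ∈ Q, ∀ y ∈ Q, (x ∈ P (j + 1) ↔ y ∈ P (j + 1))) →
      ∫⁻ x in Y j ∩ Q, ENNReal.ofReal (Real.exp (-Φ x) / m x) ∂μ ≤
        ENNReal.ofReal (Real.exp (-j) * (Real.exp 1 * (2 * (D * (j + 1)) + 2))) := by
    intro j Q hQ hQP
    refine setLIntegral_exp_neg_div_le_of_log_div_le hm ((hY j).inter hQ)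
      (fun x hx => hpos x hx.1.1)
      (fun c => (measure_mono fun x hx => And.intro hx.1.1.1 hx.2).trans (hrank c))
      (fun x hx => hx.1.2.1) (by positivity) fun x hx y hy => ?_
    exact hosc (j + 1) (by positivity) x hx.1.1 y hy.1.1 hx.1.2.2.le hy.1.2.2.le
      (hQP x hx.2 y hy.2)
  have hlayer : ∀ j, ∫⁻ x in Y j, ENNReal.ofReal (Real.exp (-Φ x) / m x) ∂μ ≤
      ENNReal.ofReal (garsiaTerm D j) := fun j => by
    rw [← lintegral_inter_add_sdiff _ (Y j) (hP (j + 1)), garsiaTerm, two_mul,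
      ENNReal.ofReal_add (by positivity) (by positivity)]
    exact add_le_add (hpiece j _ (hP _) fun x hx y hy => iff_of_true hx hy)
      (hpiece j _ (hP _).compl fun x hx y hy => iff_of_false hx hy)
  have hcover : S ⊆ ⋃ j, Y j := fun x hx => Set.mem_iUnion.2
    ⟨⌊Φ x⌋₊, hx, Nat.floor_le (hΦ₀ x hx), Nat.lt_floor_add_one _⟩
  calc ∫⁻ x in S, ENNReal.ofReal (Real.exp (-Φ x) / m x) ∂μ
      ≤ ∫⁻ x in ⋃ j, Y j, ENNReal.ofReal (Real.exp (-Φ x) / m x) ∂μ := lintegral_mono_set hcover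
    _ ≤ ∑' j, ∫⁻ x in Y j, ENNReal.ofReal (Real.exp (-Φ x) / m x) ∂μ := lintegral_iUnion_le _ _
    _ ≤ ∑' j, ENNReal.ofReal (garsiaTerm D j) := ENNReal.tsum_le_tsum hlayer
    _ = ENNReal.ofReal (garsiaConst D) :=
        (ENNReal.ofReal_tsum_of_nonneg (fun j => (garsiaTerm_pos hD j).le)
          (summable_garsiaTerm D)).symm

theorem measurable_deficit_comp {w : α → ℝ} (hw : Measurable w) (γ r p M : ℝ) :
    Measurable fun x => deficit γ r p M (distributionFunction μ w) (w x) :=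
  ((measurable_const.sub (Real.measurable_log.comp (measurable_distributionFunction_comp hw))).sub
    ((hw.pow_const r).const_mul γ)).add ((Real.measurable_log.comp hw).const_mul _)

/-- The constant in the integral form `LevelProfile.setLIntegral_exp_div_rpow_le` of the exact
growth inequality. -/
def exactGrowthConst (γ r p : ℝ) : ℝ :=
  Real.exp (growthConst γ r p) * garsiaConst (2 * (1 + LevelProfile.heightConst r))

theorem exactGrowthConst_pos {r : ℝ} (hr : 1 < r) (γ p : ℝ) : 0 < exactGrowthConst γ r p := by
  have hA := LevelProfile.heightConst_pos hr
  exact mul_pos (Real.exp_pos _) (garsiaConst_pos (by positivity))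

namespace LevelProfile

variable {γ r p M : ℝ} {w : α → ℝ} {G : ℝ → ℝ}

theorem nonneg_of_distributionFunction (h : LevelProfile γ r p M (distributionFunction μ w) G) :
    0 ≤ M := by
  have hcheb : distributionFunction μ w 1 ≤ M := by simpa using h.chebyshev 1 one_pos
  exact measureReal_nonneg.trans hcheb

theorem setLIntegral_exp_neg_deficit_div_le
    (h : LevelProfile γ r p M (distributionFunction μ w) G) (hw : Measurable w)
    (hfin : μ {x | 1 ≤ w x} ≠ ∞) (hγ : 0 < γ) (hr : 1 < r) (hr₂ : r ≤ 2) (hp : 0 ≤ p) :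
    ∫⁻ x in {x | 1 ≤ w x ∧ 0 < distributionFunction μ w (w x)}, ENNReal.ofReal
        (Real.exp (-(deficit γ r p M (distributionFunction μ w) (w x) + growthConst γ r p)) /
          distributionFunction μ w (w x)) ∂μ ≤
      ENNReal.ofReal (garsiaConst (2 * (1 + heightConst r))) := by
  have hN := measurable_distributionFunction_comp (μ := μ) hw
  have hA := heightConst_pos hr
  refine setLIntegral_exp_neg_div_le hN ((measurable_deficit_comp hw γ r p M).add_const _)
    ((measurableSet_le measurable_const hw).inter (measurableSet_lt measurable_const hN))
    (fun x hx => hx.2) (fun x hx => ?_)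
    (fun c => (measure_mono fun x hx => And.intro hx.1.1 hx.2).trans
      (measure_setOf_distributionFunction_le hfin c))
    (P := fun X => {x | γ * w x ^ r ≤ heightConst r * X})
    (fun X => measurableSet_le ((hw.pow_const r).const_mul γ) measurable_const) (by positivity)
    fun X hX x hx y hy hΦx hΦy hxy =>
      h.log_div_le hγ hr hr₂ hp hX hx.1 hy.1 hx.2 hy.2 hΦx hΦy hxy
  linarith [h.neg_growthConst_le_deficit hγ.le hr.le hr₂ hx.1 hx.2]

theorem setLIntegral_exp_div_rpow_le (h : LevelProfile γ r p M (distributionFunction μ w) G)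
    (hw : Measurable w) (hfin : μ {x | 1 ≤ w x} ≠ ∞) (hγ : 0 < γ) (hr : 1 < r) (hr₂ : r ≤ 2)
    (hp : 0 ≤ p) :
    ∫⁻ x in {x | 1 ≤ w x}, ENNReal.ofReal (Real.exp (γ * w x ^ r) / w x ^ (p * (r - 1))) ∂μ ≤
      ENNReal.ofReal (exactGrowthConst γ r p * M) := by
  have hN := measurable_distributionFunction_comp (μ := μ) hw
  set S := {x | 1 ≤ w x ∧ 0 < distributionFunction μ w (w x)}
  have hS : MeasurableSet S :=
    (measurableSet_le measurable_const hw).inter (measurableSet_lt measurable_const hN)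
  have hnull : μ {x | 1 ≤ w x ∧ distributionFunction μ w (w x) ≤ 0} = 0 := by
    simpa using measure_setOf_distributionFunction_le hfin 0
  have hcover : {x | 1 ≤ w x} ⊆ {x | 1 ≤ w x ∧ distributionFunction μ w (w x) ≤ 0} ∪ S :=
    fun x hx => (le_or_gt (distributionFunction μ w (w x)) 0).imp (And.intro hx) (And.intro hx)
  have hpoint : ∀ x ∈ S, Real.exp (γ * w x ^ r) / w x ^ (p * (r - 1)) =
      M * Real.exp (growthConst γ r p) *
        (Real.exp (-(deficit γ r p M (distributionFunction μ w) (w x) + growthConst γ r p)) /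
          distributionFunction μ w (w x)) := fun x hx => by
    have hwx : 0 < w x := one_pos.trans_le hx.1
    rw [exp_div_rpow_eq (h.pos hwx hx.2) hwx hx.2, neg_add, Real.exp_add,
      Real.exp_neg (growthConst γ r p)]
    field_simp
  have hc : 0 ≤ M * Real.exp (growthConst γ r p) :=
    mul_nonneg h.nonneg_of_distributionFunction (Real.exp_pos _).le
  calc ∫⁻ x in {x | 1 ≤ w x}, ENNReal.ofReal (Real.exp (γ * w x ^ r) / w x ^ (p * (r - 1))) ∂μ
      ≤ ∫⁻ x in S, ENNReal.ofReal (Real.exp (γ * w x ^ r) / w x ^ (p * (r - 1))) ∂μ := by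
        refine (lintegral_mono_set hcover).trans ((lintegral_union_le _ _ _).trans_eq ?_)
        rw [setLIntegral_measure_zero _ _ hnull, zero_add]
    _ = ENNReal.ofReal (M * Real.exp (growthConst γ r p)) * ∫⁻ x in S, ENNReal.ofReal
          (Real.exp (-(deficit γ r p M (distributionFunction μ w) (w x) + growthConst γ r p)) /
            distributionFunction μ w (w x)) ∂μ := by
        rw [← lintegral_const_mul' _ _ ENNReal.ofReal_ne_top]
        refine setLIntegral_congr_fun hS fun x hx => ?_
        rw [hpoint x hx, ENNReal.ofReal_mul hc]
    _ ≤ ENNReal.ofReal (M * Real.exp (growthConst γ r p)) *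
          ENNReal.ofReal (garsiaConst (2 * (1 + heightConst r))) := by
        gcongr
        exact h.setLIntegral_exp_neg_deficit_div_le hw hfin hγ hr hr₂ hp
    _ = ENNReal.ofReal (exactGrowthConst γ r p * M) := by
        rw [← ENNReal.ofReal_mul hc, exactGrowthConst]
        ring_nf

end LevelProfile

end Garsia

/-! ### Exact growth inequality -/

section ExactGrowth

theorem mul_distributionFunction_le_integral {α : Type*} [MeasurableSpace α] {μ : Measure α}
    {f : α → ℝ} {p : ℝ} (hp : 0 ≤ p) (hf : ∀ x, 0 ≤ f x) (hint : Integrable (fun x => f x ^ p) μ)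
    {a : ℝ} (ha : 0 < a) : a ^ p * distributionFunction μ f a ≤ ∫ x, f x ^ p ∂μ := by
  have hpow : ∀ x, 0 ≤ f x ^ p := fun x => Real.rpow_nonneg (hf x) p
  have hap : 0 < a ^ p := Real.rpow_pos_of_pos ha p
  calc a ^ p * distributionFunction μ f a ≤ a ^ p * μ.real {x | a ^ p ≤ f x ^ p} := by
        gcongr
        exact measureReal_mono (fun x hx => Real.rpow_le_rpow ha.le hx hp)
          (hint.measure_ge_lt_top hap).ne
    _ ≤ ∫ x, f x ^ p ∂μ := mul_meas_ge_le_integral_of_nonneg (ae_of_all _ hpow) hint (a ^ p)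

theorem integrable_norm_rpow {X F : Type*} [TopologicalSpace X] [MeasurableSpace X]
    [OpensMeasurableSpace X] {μ : Measure X} [IsFiniteMeasureOnCompacts μ]
    [NormedAddCommGroup F] {u : X → F} {p : ℝ} (hu : Continuous u) (hc : HasCompactSupport u)
    (hp : 0 < p) : Integrable (fun x => ‖u x‖ ^ p) μ :=
  (hu.norm.rpow_const fun _ => Or.inr hp.le).integrable_of_hasCompactSupport
    (hc.comp_left (g := fun z => ‖z‖ ^ p) (by simp [hp.ne']))

variable {E F : Type*} [NormedAddCommGroup E] [NormedSpace ℝ E] [FiniteDimensional ℝ E]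
  [Nontrivial E] [MeasurableSpace E] [BorelSpace E] [NormedAddCommGroup F] [NormedSpace ℝ F]
  {μ : Measure E} [μ.IsAddHaarMeasure] {u : E → F} {r p : ℝ}

local notation "d" => Module.finrank ℝ E

theorem levelProfile_of_integral_le_one (hr : (d : ℝ).HolderConjugate r) (hp : 0 < p)
    (hu : ContDiff ℝ 1 u) (hc : HasCompactSupport u)
    (henergy : ∫ x, ‖fderiv ℝ u x‖ ^ (d : ℝ) ∂μ ≤ 1) :
    LevelProfile (isoConst μ ^ r) r p (∫ x, ‖u x‖ ^ p ∂μ) (distributionFunction μ (‖u ·‖))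
      (levelEnergy μ u) where
  antitoneOn := antitoneOn_distributionFunction_norm hu.continuous hc
  monotone := monotone_levelEnergy hu hc
  nonneg := levelEnergy_nonneg
  le_one a := (levelEnergy_le_integral hu hc a).trans henergy
  chebyshev _ ha := mul_distributionFunction_le_integral hp.le (fun _ => norm_nonneg _)
    (integrable_norm_rpow hu.continuous hc hp) ha
  capacity _ _ hs hst ht := isoConst_rpow_mul_sub_rpow_le hr hu hc hs hst ht

theorem setIntegral_exp_div_rpow_le (hr : (d : ℝ).HolderConjugate r) (hr₂ : r ≤ 2) (hp : 0 < p)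
    (hu : ContDiff ℝ 1 u) (hc : HasCompactSupport u)
    (henergy : ∫ x, ‖fderiv ℝ u x‖ ^ (d : ℝ) ∂μ ≤ 1) :
    ∫ x in {x | 1 ≤ ‖u x‖}, Real.exp (isoConst μ ^ r * ‖u x‖ ^ r) / ‖u x‖ ^ (p * (r - 1)) ∂μ ≤
      exactGrowthConst (isoConst μ ^ r) r p * ∫ x, ‖u x‖ ^ p ∂μ := by
  have hγ : 0 < isoConst μ ^ r := Real.rpow_pos_of_pos (isoConst_pos μ) r
  have hprofile := levelProfile_of_integral_le_one hr hp hu hc henergy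
  have hlintegral := hprofile.setLIntegral_exp_div_rpow_le hu.continuous.norm.measurable
    (isCompact_setOf_le_norm hu.continuous hc one_pos).measure_ne_top hγ hr.symm.lt hr₂ hp.le
  have hmeas : Measurable fun x =>
      Real.exp (isoConst μ ^ r * ‖u x‖ ^ r) / ‖u x‖ ^ (p * (r - 1)) := by
    have := hu.continuous.norm.measurable
    fun_prop
  rw [integral_eq_lintegral_of_nonneg_ae (ae_of_all _ fun x => by positivity)
    hmeas.aestronglyMeasurable]
  exact ENNReal.toReal_le_of_le_ofReal (mul_nonneg (exactGrowthConst_pos hr.symm.lt _ _).le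
    (integral_nonneg fun x => by positivity)) hlintegral

end ExactGrowth

section Euclidean

theorem omegaSphere_eq_mul_volume_closedBall {n : ℕ} (hn : 0 < n) :
    omegaSphere n = n * volume.real (closedBall (0 : EuclideanSpace ℝ (Fin n)) 1) := by
  have : Nonempty (Fin n) := ⟨⟨0, hn⟩⟩
  have hn₂ : (0 : ℝ) < n / 2 := by positivity
  have := Real.Gamma_pos_of_pos hn₂
  rw [measureReal_def, EuclideanSpace.volume_closedBall, omegaSphere, ENNReal.ofReal_one, one_pow,
    one_mul, Fintype.card_fin, ENNReal.toReal_ofReal (by positivity), Real.Gamma_add_one hn₂.ne',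
    Real.sqrt_eq_rpow, ← Real.rpow_mul_natCast Real.pi_pos.le, one_div_mul_eq_div]
  field_simp

theorem isoConst_volume_rpow {n : ℕ} (hn : 2 ≤ n) :
    isoConst (volume : Measure (EuclideanSpace ℝ (Fin n))) ^ ((n : ℝ) / (n - 1)) = gammaN1 n := by
  have hn₀ : (0 : ℝ) < n := by positivity
  have hn₁ : (n : ℝ) - 1 ≠ 0 := by
    have : (2 : ℝ) ≤ n := by exact_mod_cast hn
    linarith
  have hexp : (n : ℝ) / (n - 1) = 1 + 1 / (n - 1) := by
    field_simp
    ring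
  set v := volume.real (closedBall (0 : EuclideanSpace ℝ (Fin n)) 1) with hv
  have hv₀ : 0 ≤ v := measureReal_nonneg
  have hvexp : (v ^ (n : ℝ)⁻¹) ^ ((n : ℝ) / (n - 1)) = v ^ (1 / ((n : ℝ) - 1)) := by
    rw [← Real.rpow_mul hv₀]
    congr 1
    field_simp
  rw [isoConst, finrank_euclideanSpace_fin, gammaN1,
    omegaSphere_eq_mul_volume_closedBall (by omega), ← hv, Real.mul_rpow hn₀.le (by positivity),
    hvexp, Real.mul_rpow hn₀.le hv₀, hexp, Real.rpow_add hn₀, Real.rpow_one, mul_assoc]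

theorem norm_gradient_eq_norm_fderiv {E : Type*} [NormedAddCommGroup E] [InnerProductSpace ℝ E]
    [CompleteSpace E] (u : E → ℝ) (x : E) : ‖gradient u x‖ = ‖fderiv ℝ u x‖ :=
  (InnerProductSpace.toDual ℝ E).symm.norm_map _

end Euclidean

theorem moser_trudinger_exact_growth_gradient_general {E : Type*} [NormedAddCommGroup E]
    [NormedSpace ℝ E] [FiniteDimensional ℝ E] [MeasurableSpace E] [BorelSpace E] (μ : Measure E)
    [μ.IsAddHaarMeasure] {F : Type*} [NormedAddCommGroup F] [NormedSpace ℝ F] {n : ℕ}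
    (hE : Module.finrank ℝ E = n) (hn : 2 ≤ n) {p : ℝ} (hp : 0 < p) :
    ∃ C : ℝ, 0 < C ∧ ∀ u : E → F, ContDiff ℝ 1 u → HasCompactSupport u →
      (∫ x, ‖fderiv ℝ u x‖ ^ (n : ℝ) ∂μ) ≤ 1 →
      ∫ x in {x | 1 ≤ ‖u x‖},
          Real.exp (isoConst μ ^ ((n : ℝ) / (n - 1)) * ‖u x‖ ^ ((n : ℝ) / (n - 1))) /
            ‖u x‖ ^ (p / (n - 1)) ∂μ
        ≤ C * ∫ x, ‖u x‖ ^ p ∂μ := by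
  subst hE
  have : Nontrivial E := Module.nontrivial_of_finrank_pos (R := ℝ) (by omega)
  have hd : (2 : ℝ) ≤ Module.finrank ℝ E := by exact_mod_cast hn
  have hr := Real.HolderConjugate.conjExponent (by linarith : (1 : ℝ) < Module.finrank ℝ E)
  have hr₂ : (Module.finrank ℝ E : ℝ) / (Module.finrank ℝ E - 1) ≤ 2 := by
    rw [div_le_iff₀ (by linarith)]
    linarith
  have hrp : p / ((Module.finrank ℝ E : ℝ) - 1) =
      p * ((Module.finrank ℝ E : ℝ) / (Module.finrank ℝ E - 1) - 1) := by
    have : (Module.finrank ℝ E : ℝ) - 1 ≠ 0 := by linarith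
    field_simp
    ring
  rw [hrp]
  exact ⟨_, exactGrowthConst_pos hr.symm.lt _ p, fun u => setIntegral_exp_div_rpow_le hr hr₂ hp⟩

/-- **Inequality (8.3)** (improved Moser–Trudinger inequality with exact growth condition for
the gradient on `ℝⁿ`): for `p ≥ 1` there is `C` such that for all `u ∈ C_c^∞(ℝⁿ)` with
`‖∇u‖_n ≤ 1`,
`∫_{|u| ≥ 1} exp[γ_{n,1}|u|^{n/(n-1)}]/|u|^{p/(n-1)} dx ≤ C‖u‖_p^p`. -/
theorem moser_trudinger_exact_growth_gradient
    (n : ℕ) (hn : 2 ≤ n) (p : ℝ) (hp : 1 ≤ p) :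
    ∃ C : ℝ, 0 < C ∧ ∀ u : EuclideanSpace ℝ (Fin n) → ℝ,
      ContDiff ℝ (⊤ : ℕ∞) u → HasCompactSupport u →
      (∫ x, ‖gradient u x‖ ^ (n : ℝ)) ≤ 1 →
      ∫ x in {x | 1 ≤ |u x|},
          Real.exp (gammaN1 n * |u x| ^ ((n : ℝ) / ((n : ℝ) - 1))) /
            |u x| ^ (p / ((n : ℝ) - 1))
        ≤ C * ∫ x, |u x| ^ p := by
  simp only [← isoConst_volume_rpow hn, norm_gradient_eq_norm_fderiv]
  obtain ⟨C, hC, hbound⟩ := moser_trudinger_exact_growth_gradient_general volume (F := ℝ)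
    finrank_euclideanSpace_fin hn (one_pos.trans_le hp)
  exact ⟨C, hC, fun u hu => hbound u (hu.of_le (by simp))⟩
end
end
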